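/- arXiv:1710.10484 — 3 statements merged into one kernel-verified Lean document; each statement's English description precedes it below -/
import Mathlib

section
/- Let α ∈ [0,1). If G is a connected graph of order n with clique number ω ≥ 2, then ρ_α(G) ≥ ρ_α(PK_{n−ω,ω}), with equality if and only if G is isomorphic to PK_{n−ω,ω}. -/
/-!
The lower bounds come from test vectors: if `y ≥ 0` is nonzero and `A_α(G) y ≥ λ y` on the support
of `y`, then `ρ_α(G) ≥ λ`, strictly if the inequality is strict somewhere on the support
(`le_rho_of_test`). Take `λ = ρ_α(PK_{p,q})` with `p = n - ω`, `q = ω`.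

Along its path the Perron vector of `PK_{p,q}` obeys `x_{k+2} = c x_{k+1} - x_k` (`pathSeq`), and a
pendant path with `m` vertices contributes `h(m) = α + (1-α) x_m/x_{m+1}` (`pathWeight`) to the
eigenvalue equation at the vertex carrying it. The crux is that `h` is strictly subadditive: by a
Casorati identity this says `x_{a+1} < x_{b+1} x_{a+b+1}`. For `q ≥ 3` it holds since `c ≥ 2` makes
the sequence increase (`subadd_of_two_le`); for `q = 2` it follows from the palindromic symmetry of
the Perron vector of a path (`subadd_of_path`).

Subadditivity means that a connected piece hanging off a vertex `r` always contributes at least as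
much as a pendant path with the same number of vertices. This is an induction on rooted connected
sets, which either moves the root to a neighbour or glues two smaller pieces at the root
(`hasTest_of_rootedConn`); there is a strict surplus unless the piece has a spanning path from `r`.
In that exceptional case `G` contains a spanning copy of `PK_{p,q}`, and strict monotonicity of `ρ_α`
under adding edges (`rho_mono`) settles equality (`compare_of_rootedConn`).

It remains to find a clique with everything else hanging off one vertex. For `q = 2` an edge at a
non-cut vertex will do (`compare_two`). For `q ≥ 3`, if a maximum clique fails, then two of its
vertices have neighbours outside it, and an explicit test vector supported on the clique and these
neighbours gives `ρ_α(G) > λ` whatever `p` is (`two_pendants`).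
-/

/-- The spectral radius (largest eigenvalue) of a real symmetric matrix, as the
supremum of its set of real eigenvalues. -/
noncomputable def specRad {n : Type*} [Fintype n] (M : Matrix n n ℝ) : ℝ :=
  sSup {t : ℝ | ∃ v : n → ℝ, v ≠ 0 ∧ M.mulVec v = t • v}

/-- The matrix `A_α(G) = α·D(G) + (1-α)·A(G)`. -/
noncomputable def Aalpha {V : Type*} [Fintype V] [DecidableEq V]
    (α : ℝ) (G : SimpleGraph V) : Matrix V V ℝ :=
  letI := Classical.decRel G.Adj
  α • Matrix.diagonal (fun v => (G.degree v : ℝ)) + (1 - α) • G.adjMatrix ℝ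

/-- The `α`-index `ρ_α(G)`: the spectral radius of `A_α(G)`. -/
noncomputable def rhoAlpha {V : Type*} [Fintype V] [DecidableEq V]
    (α : ℝ) (G : SimpleGraph V) : ℝ :=
  specRad (Aalpha α G)

/-- The bug graph `B_{p,q,r}`: the complete graph `K_p` minus an edge `{u,v}`, with a
path on `q` vertices attached at `u` and a path on `r` vertices attached at `v`
(attaching means identifying one end of the path with the root, so `B_{p,q,r}` has
`p+q+r-2` vertices). Vertices `0,…,q-1` form the first path (with `u = q-1`),
vertices `q-1,…,q+p-2` form the clique with the edge `{q-1, q+p-2}` removed, and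
vertices `q+p-2,…,p+q+r-3` form the second path (with `v = q+p-2`). -/
def bugGraph (p q r : ℕ) : SimpleGraph (Fin (p + q + r - 2)) :=
  SimpleGraph.fromRel (fun i j =>
    (i.val + 1 = j.val ∧ j.val ≤ q - 1) ∨
    (q - 1 ≤ i.val ∧ i.val ≤ q + p - 2 ∧ q - 1 ≤ j.val ∧ j.val ≤ q + p - 2 ∧
      ¬(i.val = q - 1 ∧ j.val = q + p - 2) ∧ ¬(j.val = q - 1 ∧ i.val = q + p - 2)) ∨
    (i.val + 1 = j.val ∧ q + p - 2 ≤ i.val))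

/-- `PK_{p,q}`: an end-vertex of a path on `p` vertices (vertices `0,…,p-1`)
joined by a new edge to a vertex of a complete graph `K_q` (vertices `p,…,p+q-1`). -/
def pkGraph (p q : ℕ) : SimpleGraph (Fin (p + q)) :=
  SimpleGraph.fromRel (fun i j =>
    (i.val + 1 = j.val ∧ j.val ≤ p) ∨ (p ≤ i.val ∧ p ≤ j.val))


open Finset Matrix

set_option linter.unusedSectionVars false

/-! ### Spectral radius of a symmetric matrix -/

section Spectral

variable {V : Type*} [Fintype V] [DecidableEq V]

lemma specSet_finite (M : Matrix V V ℝ) :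
    {t : ℝ | ∃ v : V → ℝ, v ≠ 0 ∧ M.mulVec v = t • v}.Finite := by
  refine (Module.End.finite_hasEigenvalue (Matrix.toLin' M)).subset ?_
  rintro t ⟨v, hv, h⟩
  exact Module.End.hasEigenvalue_of_hasEigenvector (x := v)
    ⟨Module.End.mem_eigenspace_iff.2 (by simpa using h), hv⟩

lemma specRad_mem [Nonempty V] {M : Matrix V V ℝ} (hM : M.IsHermitian) :
    ∃ v : V → ℝ, v ≠ 0 ∧ M.mulVec v = specRad M • v := by
  have hne : {t : ℝ | ∃ v : V → ℝ, v ≠ 0 ∧ M.mulVec v = t • v}.Nonempty := by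
    obtain ⟨j⟩ := ‹Nonempty V›
    refine ⟨hM.eigenvalues j, (hM.eigenvectorBasis j).ofLp, ?_, ?_⟩
    · intro h
      exact hM.eigenvectorBasis.orthonormal.ne_zero j (by ext i; simpa using congrFun h i)
    · simpa using hM.mulVec_eigenvectorBasis j
  exact hne.csSup_mem (specSet_finite M)

/-- Every eigenvalue `e` of `ρI - M` yields the eigenvalue `ρ - e ≤ ρ` of `M`, so `e ≥ 0`. -/
lemma specRad_posSemidef {M : Matrix V V ℝ} (hM : M.IsHermitian) :
    (specRad M • (1 : Matrix V V ℝ) - M).PosSemidef := by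
  have hH : (specRad M • (1 : Matrix V V ℝ) - M).IsHermitian := by
    refine IsHermitian.sub ?_ hM
    simp [IsHermitian]
  rw [hH.posSemidef_iff_eigenvalues_nonneg]
  intro j
  have h1 := hH.mulVec_eigenvectorBasis j
  have hmem : specRad M - hH.eigenvalues j ∈
      {t : ℝ | ∃ v : V → ℝ, v ≠ 0 ∧ M.mulVec v = t • v} := by
    refine ⟨(hH.eigenvectorBasis j).ofLp, ?_, ?_⟩
    · intro h
      exact hH.eigenvectorBasis.orthonormal.ne_zero j (by ext i; simpa using congrFun h i)
    · rw [sub_mulVec, smul_mulVec, one_mulVec] at h1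
      rw [sub_smul, ← h1]
      simp
  have := le_csSup (specSet_finite M).bddAbove hmem
  change _ ≤ specRad M at this
  change 0 ≤ hH.eigenvalues j
  linarith

lemma rayleigh_le {M : Matrix V V ℝ} (hM : M.IsHermitian) (y : V → ℝ) :
    y ⬝ᵥ (M *ᵥ y) ≤ specRad M * (y ⬝ᵥ y) := by
  have := (specRad_posSemidef hM).dotProduct_mulVec_nonneg y
  rw [sub_mulVec, smul_mulVec, one_mulVec, star_trivial, dotProduct_sub, dotProduct_smul,
    smul_eq_mul] at this
  linarith

lemma rayleigh_eq {M : Matrix V V ℝ} (hM : M.IsHermitian) (y : V → ℝ)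
    (h : specRad M * (y ⬝ᵥ y) ≤ y ⬝ᵥ (M *ᵥ y)) : M *ᵥ y = specRad M • y := by
  have h0 := ((specRad_posSemidef hM).dotProduct_mulVec_zero_iff y).1 (by
    rw [sub_mulVec, smul_mulVec, one_mulVec, star_trivial, dotProduct_sub, dotProduct_smul,
      smul_eq_mul]
    linarith [rayleigh_le hM y])
  rw [sub_mulVec, smul_mulVec, one_mulVec, sub_eq_zero] at h0
  exact h0.symm

end Spectral

/-! ### The operator `A_α(G)` and test vectors -/

section Graph

variable {V : Type*} [Fintype V] [DecidableEq V]

open Classical in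
/-- The value at `v` of `A_α(G) y`, with the neighbours of `v` restricted to `S`:
`∑ (α y_v + (1-α) y_w)` over the neighbours `w ∈ S` of `v`. -/
noncomputable def nbSum (G : SimpleGraph V) (α : ℝ) (S : Finset V) (y : V → ℝ) (v : V) : ℝ :=
  ∑ w ∈ S, if G.Adj v w then α * y v + (1 - α) * y w else 0

lemma Aalpha_isHermitian (α : ℝ) (G : SimpleGraph V) : (Aalpha α G).IsHermitian := by
  classical
  unfold Aalpha
  ext i j
  simp [Matrix.diagonal_apply, SimpleGraph.adjMatrix_apply, G.adj_comm, eq_comm]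
  split_ifs with h
  · rw [h]
  · rfl

lemma Aalpha_mulVec (α : ℝ) (G : SimpleGraph V) (y : V → ℝ) (v : V) :
    (Aalpha α G *ᵥ y) v = nbSum G α univ y v := by
  classical
  unfold Aalpha nbSum
  rw [add_mulVec, smul_mulVec, smul_mulVec, Pi.add_apply, Pi.smul_apply, Pi.smul_apply,
    SimpleGraph.adjMatrix_mulVec_apply, mulVec_diagonal, ← sum_filter, sum_add_distrib, sum_const,
    ← SimpleGraph.neighborFinset_eq_filter, ← mul_sum, SimpleGraph.card_neighborFinset_eq_degree]
  simp only [smul_eq_mul, nsmul_eq_mul]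
  rw [mul_left_comm]

lemma nbSum_mono {G : SimpleGraph V} {α : ℝ} (h0 : 0 ≤ α) (h1 : α < 1) {S T : Finset V}
    (hST : S ⊆ T) {y : V → ℝ} (hy : ∀ v ∈ T, 0 ≤ y v) {v : V} (hv : v ∈ T) :
    nbSum G α S y v ≤ nbSum G α T y v := by
  classical
  unfold nbSum
  refine sum_le_sum_of_subset_of_nonneg hST ?_
  intro w hw _
  split_ifs
  · have := hy v hv
    have := hy w hw
    have : 0 ≤ 1 - α := by linarith
    positivity
  · exact le_rfl

lemma nbSum_congr {G : SimpleGraph V} {α : ℝ} {S : Finset V} {y z : V → ℝ} {v : V}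
    (hv : y v = z v) (h : ∀ w ∈ S, y w = z w) : nbSum G α S y v = nbSum G α S z v := by
  unfold nbSum
  exact sum_congr rfl fun w hw => by rw [hv, h w hw]

lemma nbSum_smul {G : SimpleGraph V} {α : ℝ} {S : Finset V} (t : ℝ) (y : V → ℝ) (v : V) :
    nbSum G α S (fun w => t * y w) v = t * nbSum G α S y v := by
  unfold nbSum
  rw [mul_sum]
  exact sum_congr rfl fun w _ => by split_ifs <;> ring

lemma nbSum_union {G : SimpleGraph V} {α : ℝ} {S T : Finset V} (h : Disjoint S T) (y : V → ℝ)
    (v : V) : nbSum G α (S ∪ T) y v = nbSum G α S y v + nbSum G α T y v := by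
  unfold nbSum
  exact sum_union h

lemma nbSum_singleton {G : SimpleGraph V} {α : ℝ} {y : V → ℝ} {v w : V} (h : G.Adj v w) :
    nbSum G α {w} y v = α * y v + (1 - α) * y w := by
  simp [nbSum, h]

/-- A nonnegative test vector with `A_α(G) y ≥ t y` on its support bounds `ρ_α(G)` below by `t`;
strict inequality at one point of the support makes the bound strict. -/
lemma le_rho_of_test {G : SimpleGraph V} {α t : ℝ} {y : V → ℝ} (hy : ∀ v, 0 ≤ y v)
    (hne : ∃ v, y v ≠ 0) (h : ∀ v, 0 < y v → t * y v ≤ nbSum G α univ y v) :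
    t ≤ rhoAlpha α G ∧
      ((∃ v, 0 < y v ∧ t * y v < nbSum G α univ y v) → t < rhoAlpha α G) := by
  have hR := rayleigh_le (Aalpha_isHermitian α G) y
  have hpos : 0 < y ⬝ᵥ y := by
    obtain ⟨v, hv⟩ := hne
    exact sum_pos' (fun i _ => mul_self_nonneg _) ⟨v, mem_univ _, mul_self_pos.2 hv⟩
  have hle : ∀ v ∈ univ, t * (y v * y v) ≤ y v * (Aalpha α G *ᵥ y) v := by
    intro v _
    rw [Aalpha_mulVec]
    rcases (hy v).eq_or_lt with h0 | h0
    · simp [← h0]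
    · nlinarith [h v h0]
  have hsum : t * (y ⬝ᵥ y) = ∑ v, t * (y v * y v) := by rw [dotProduct, mul_sum]
  constructor
  · have h1 : t * (y ⬝ᵥ y) ≤ y ⬝ᵥ (Aalpha α G *ᵥ y) := by rw [hsum]; exact sum_le_sum hle
    exact le_of_mul_le_mul_right (h1.trans hR) hpos
  · rintro ⟨v, hv, hlt⟩
    have h1 : t * (y ⬝ᵥ y) < y ⬝ᵥ (Aalpha α G *ᵥ y) := by
      rw [hsum]
      refine sum_lt_sum hle ⟨v, mem_univ _, ?_⟩
      rw [Aalpha_mulVec]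
      nlinarith
    exact lt_of_mul_lt_mul_right (h1.trans_le hR) hpos.le

lemma exists_boundary {G : SimpleGraph V} (hG : G.Preconnected) {T : Set V} {a b : V}
    (ha : a ∈ T) (hb : b ∉ T) : ∃ u ∈ T, ∃ w ∉ T, G.Adj u w := by
  obtain ⟨p⟩ := hG a b
  obtain ⟨d, _, h1, h2⟩ := p.exists_boundary_dart T ha hb
  exact ⟨d.fst, h1, d.snd, h2, d.adj⟩

/-- Perron-Frobenius for `A_α` of a connected graph: `|v|` is an eigenvector for `ρ_α` whenever
`v` is, and its zero set is closed under adjacency. -/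
lemma exists_perron {G : SimpleGraph V} (hG : G.Connected) {α : ℝ} (h0 : 0 ≤ α) (h1 : α < 1) :
    ∃ y : V → ℝ, (∀ v, 0 < y v) ∧ ∀ v, rhoAlpha α G * y v = nbSum G α univ y v := by
  classical
  have := hG.nonempty
  have hH := Aalpha_isHermitian α G
  have hb : 0 < 1 - α := by linarith
  obtain ⟨v, hv, hev⟩ := specRad_mem hH
  have hle : specRad (Aalpha α G) * ((fun i => |v i|) ⬝ᵥ (fun i => |v i|)) ≤
      (fun i => |v i|) ⬝ᵥ (Aalpha α G *ᵥ (fun i => |v i|)) := by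
    have e1 : (fun i => |v i|) ⬝ᵥ (fun i => |v i|) = v ⬝ᵥ v := by simp [dotProduct]
    have e2 : specRad (Aalpha α G) * (v ⬝ᵥ v) = v ⬝ᵥ (Aalpha α G *ᵥ v) := by
      rw [hev, dotProduct_smul, smul_eq_mul]
    rw [e1, e2, dotProduct, dotProduct]
    refine sum_le_sum fun i _ => ?_
    rw [Aalpha_mulVec, Aalpha_mulVec, nbSum, nbSum, mul_sum, mul_sum]
    refine sum_le_sum fun j _ => ?_
    split_ifs
    · have e3 : v i * v j ≤ |v i| * |v j| := by rw [← abs_mul]; exact le_abs_self _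
      have e4 : |v i| * |v i| = v i * v i := abs_mul_abs_self _
      nlinarith [mul_le_mul_of_nonneg_left e3 hb.le]
    · simp
  have heq := rayleigh_eq hH _ hle
  have hev' : ∀ i, rhoAlpha α G * |v i| = nbSum G α univ (fun i => |v i|) i := by
    intro i
    rw [← Aalpha_mulVec, heq]
    rfl
  refine ⟨fun i => |v i|, ?_, hev'⟩
  by_contra! hcon
  obtain ⟨a, ha⟩ := hcon
  obtain ⟨b, hb'⟩ : ∃ b, v b ≠ 0 := by
    by_contra! h
    exact hv (funext h)
  obtain ⟨u, hu, w, hw, huw⟩ := exists_boundary hG.preconnected (T := {i | v i = 0})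
    (abs_nonpos_iff.1 ha) hb'
  have h2 := hev' u
  have hu' : v u = 0 := hu
  have h3 : nbSum G α {w} (fun i => |v i|) u ≤ nbSum G α univ (fun i => |v i|) u :=
    nbSum_mono h0 h1 (subset_univ _) (fun _ _ => abs_nonneg _) (mem_univ _)
  rw [nbSum_singleton huw, ← h2] at h3
  simp only [hu', abs_zero, mul_zero, zero_add] at h3
  have : 0 < |v w| := abs_pos.2 hw
  nlinarith

/-- Adding edges to a connected graph does not decrease `ρ_α`, and adding at least one edge
increases it. -/
lemma rho_mono {W : Type*} [Fintype W] [DecidableEq W] {G : SimpleGraph V} {H : SimpleGraph W}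
    (hH : H.Connected) {α : ℝ} (h0 : 0 ≤ α) (h1 : α < 1) (e : W ≃ V)
    (he : ∀ i j, H.Adj i j → G.Adj (e i) (e j)) :
    rhoAlpha α H ≤ rhoAlpha α G ∧
      (rhoAlpha α G = rhoAlpha α H → Nonempty (G ≃g H)) := by
  classical
  obtain ⟨x, hx, hev⟩ := exists_perron hH h0 h1
  have hb : 0 < 1 - α := by linarith
  have key : ∀ i, nbSum G α univ (fun v => x (e.symm v)) (e i) =
      ∑ j, if G.Adj (e i) (e j) then α * x i + (1 - α) * x j else 0 := by
    intro i
    unfold nbSum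
    rw [← e.sum_comp]
    simp
  have hterm : ∀ i j, (if H.Adj i j then α * x i + (1 - α) * x j else 0) ≤
      (if G.Adj (e i) (e j) then α * x i + (1 - α) * x j else 0) := by
    intro i j
    have := hx i
    have := hx j
    by_cases hij : H.Adj i j
    · simp [hij, he i j hij]
    · rw [if_neg hij]
      split_ifs
      · positivity
      · exact le_rfl
  have hT := le_rho_of_test (G := G) (α := α) (t := rhoAlpha α H) (y := fun v => x (e.symm v))
    (fun v => (hx _).le)
    (by obtain ⟨i⟩ := hH.nonempty; exact ⟨e i, (hx _).ne'⟩)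
    (by
      intro v _
      obtain ⟨i, rfl⟩ := e.surjective v
      rw [key, e.symm_apply_apply, hev, nbSum]
      exact sum_le_sum fun j _ => hterm i j)
  refine ⟨hT.1, fun heq => ?_⟩
  refine ⟨SimpleGraph.Iso.symm ⟨e, ?_⟩⟩
  intro i j
  refine ⟨fun hij => ?_, he i j⟩
  by_contra hcon
  refine (hT.2 ⟨e i, hx _, ?_⟩).ne' heq
  rw [key, e.symm_apply_apply, hev, nbSum]
  refine sum_lt_sum (fun j _ => hterm i j) ⟨j, mem_univ _, ?_⟩
  rw [if_neg hcon, if_pos hij]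
  have := hx i
  have := hx j
  positivity

end Graph

/-! ### The eigenvector recurrence along a path -/

section Recurrence

/-- Entries, counted from the end-vertex, of an eigenvector of `A_α` along a pendant path.
With `g = α/(1-α)` and `c = (λ-2α)/(1-α)` the eigenvalue equation at an inner path vertex is
`x_{k+2} = c x_{k+1} - x_k`; the virtual entry `x_0 = -g` turns the equation at the end-vertex
into the same recurrence. -/
def pathSeq (g c : ℝ) : ℕ → ℝ
  | 0 => -g
  | 1 => 1
  | k + 2 => c * pathSeq g c (k + 1) - pathSeq g c k

lemma pathSeq_rec (g c : ℝ) (k : ℕ) :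
    pathSeq g c (k + 2) = c * pathSeq g c (k + 1) - pathSeq g c k := rfl

/-- The contribution `α + (1-α) x_m/x_{m+1}` to the eigenvalue equation at a vertex carrying a
pendant path with `m` vertices; it vanishes for `m = 0`. -/
noncomputable def pathWeight (α g c : ℝ) (m : ℕ) : ℝ :=
  α + (1 - α) * (pathSeq g c m / pathSeq g c (m + 1))

lemma pathSeq_casorati (g c : ℝ) (a b : ℕ) :
    pathSeq g c (a + b) * pathSeq g c (b + 1) - pathSeq g c (a + b + 1) * pathSeq g c b =
      pathSeq g c a + g * pathSeq g c (a + 1) := by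
  induction b with
  | zero => simp [pathSeq]; ring
  | succ b ih =>
    rw [← ih, ← add_assoc, pathSeq_rec g c b, pathSeq_rec g c (a + b)]
    ring

lemma pathSeq_spread (g c : ℝ) (i j : ℕ) :
    (1 + g * pathSeq g c 2) *
        (pathSeq g c (i + 1) * pathSeq g c (j + 1) - pathSeq g c (i + j + 1)) =
      (pathSeq g c i + g * pathSeq g c (i + 1)) * (pathSeq g c j + g * pathSeq g c (j + 1)) := by
  induction i using Nat.twoStepInduction with
  | zero => simp [pathSeq]
  | one =>
    have h := pathSeq_rec g c j
    have h2 := pathSeq_rec g c 0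
    rw [show 1 + j + 1 = j + 2 by ring, h, show (1 + 1) = 0 + 2 from rfl, h2]
    simp only [pathSeq]
    ring
  | more i ih1 ih2 =>
    have e1 : pathSeq g c (i + 2 + j + 1) =
        c * pathSeq g c (i + 1 + j + 1) - pathSeq g c (i + j + 1) := by
      rw [show i + 2 + j + 1 = i + j + 1 + 2 by ring, pathSeq_rec,
        show i + 1 + j + 1 = i + j + 1 + 1 by ring]
    have e2 : pathSeq g c (i + 2 + 1) = c * pathSeq g c (i + 1 + 1) - pathSeq g c (i + 1) := rfl
    have e3 : pathSeq g c (i + 2) = c * pathSeq g c (i + 1) - pathSeq g c i := rfl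
    have e4 : pathSeq g c (i + 1 + 1) = pathSeq g c (i + 2) := rfl
    rw [e4] at ih2 e2
    rw [e1, e2]
    rw [e3] at ih2 ⊢
    linear_combination c * ih2 - ih1

lemma pathSeq_logConcave {g c : ℝ} (k : ℕ) :
    pathSeq g c (k + 1) ^ 2 - pathSeq g c k * pathSeq g c (k + 2) = 1 + g * pathSeq g c 2 := by
  have := pathSeq_casorati g c 1 k
  rw [show 1 + k = k + 1 by ring] at this
  simp only [show (1 + 1) = 2 from rfl, show k + 1 + 1 = k + 2 from rfl] at this
  rw [show pathSeq g c 1 = 1 from rfl] at this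
  linarith

/-- By the Casorati identity strict subadditivity of `pathWeight` amounts to
`x_1 x_{a+1} < x_{b+1} x_{a+b+1}`. -/
lemma pathWeight_subadd {α g c : ℝ} (hα : α < 1) (hg : 0 ≤ g) (hαg : (1 - α) * g = α)
    {a b : ℕ} (ha : 0 < pathSeq g c a) (ha1 : 0 < pathSeq g c (a + 1))
    (hb1 : 0 < pathSeq g c (b + 1)) (hab1 : 0 < pathSeq g c (a + b + 1))
    (hlt : pathSeq g c (a + 1) < pathSeq g c (b + 1) * pathSeq g c (a + b + 1)) :
    pathWeight α g c (a + b) < pathWeight α g c a + pathWeight α g c b := by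
  have hW := pathSeq_casorati g c a b
  have hy : 0 < pathSeq g c a + g * pathSeq g c (a + 1) := by positivity
  have h1 : pathSeq g c (a + b) / pathSeq g c (a + b + 1) - pathSeq g c b / pathSeq g c (b + 1) =
      (pathSeq g c a + g * pathSeq g c (a + 1)) /
        (pathSeq g c (b + 1) * pathSeq g c (a + b + 1)) := by
    rw [← hW]
    field_simp
  have h2 : pathSeq g c a / pathSeq g c (a + 1) + g =
      (pathSeq g c a + g * pathSeq g c (a + 1)) / pathSeq g c (a + 1) := by
    field_simp
  have h3 := div_lt_div_of_pos_left hy ha1 hlt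
  rw [← h1, ← h2] at h3
  unfold pathWeight
  have h4 := mul_lt_mul_of_pos_left h3 (show 0 < 1 - α by linarith)
  nlinarith

/-- For `c ≥ 2` the sequence increases strictly. -/
lemma pathSeq_increasing {g c : ℝ} (hg : 0 ≤ g) (hc : 2 ≤ c) (k : ℕ) :
    1 ≤ pathSeq g c (k + 1) ∧ pathSeq g c (k + 1) + 1 ≤ pathSeq g c (k + 2) := by
  induction k with
  | zero =>
    rw [pathSeq_rec]
    simp [pathSeq]
    linarith
  | succ k ih =>
    refine ⟨by linarith [ih.1, ih.2], ?_⟩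
    rw [pathSeq_rec g c (k + 1)]
    have : 1 ≤ pathSeq g c (k + 1 + 1) := by linarith [ih.1, ih.2]
    have e : pathSeq g c (k + 1 + 1) = pathSeq g c (k + 2) := rfl
    nlinarith [ih.1, ih.2]

lemma subadd_of_two_le {α g c : ℝ} (hα : α < 1) (hg : 0 ≤ g) (hαg : (1 - α) * g = α)
    (hc : 2 ≤ c) {a b : ℕ} (ha : 1 ≤ a) (hb : 1 ≤ b) :
    pathWeight α g c (a + b) < pathWeight α g c a + pathWeight α g c b := by
  have hpos : ∀ k, 1 ≤ k → 0 < pathSeq g c k := by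
    intro k hk
    obtain ⟨m, rfl⟩ := Nat.exists_eq_add_of_le' hk
    linarith [(pathSeq_increasing hg hc m).1]
  have hmono : StrictMono fun k => pathSeq g c (k + 1) :=
    strictMono_nat_of_lt_succ fun k => by
      have := (pathSeq_increasing hg hc k).2
      change pathSeq g c (k + 1) < pathSeq g c (k + 2)
      linarith
  refine pathWeight_subadd hα hg hαg (hpos _ ha) (hpos _ (by omega)) (hpos _ (by omega))
    (hpos _ (by omega)) ?_
  have h1 : pathSeq g c (a + 1) < pathSeq g c (a + b + 1) := hmono (show a < a + b by omega)
  have h2 := (pathSeq_increasing hg hc b).1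
  nlinarith [hpos (a + b + 1) (by omega)]

/-- Subadditivity when `x_1, …, x_n` is the whole Perron vector of the path on `n = p + 2`
vertices: `x_{n+1} = -g x_n` forces the palindromic symmetry `x_{n+1-k} = x_k`, after which the
required inequality is an instance of `pathSeq_spread`. -/
lemma subadd_of_path {α g c : ℝ} (hα : α < 1) (hg : 0 ≤ g) (hαg : (1 - α) * g = α) {p : ℕ}
    (hpos : ∀ k, 1 ≤ k → k ≤ p + 2 → 0 < pathSeq g c k)
    (hend : pathSeq g c (p + 3) = -g * pathSeq g c (p + 2))
    {a b : ℕ} (ha : 1 ≤ a) (hb : 1 ≤ b) (hab : a + b ≤ p) :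
    pathWeight α g c (a + b) < pathWeight α g c a + pathWeight α g c b := by
  have hrev : ∀ k, k ≤ p + 3 → pathSeq g c (p + 3 - k) = pathSeq g c (p + 2) * pathSeq g c k := by
    intro k
    induction k using Nat.twoStepInduction with
    | zero => intro _; simp [hend, pathSeq]; ring
    | one => intro _; simp [pathSeq]
    | more k ih1 ih2 =>
      intro hk
      have e := pathSeq_rec g c (p + 3 - (k + 2))
      rw [show p + 3 - (k + 2) + 2 = p + 3 - k by omega,
        show p + 3 - (k + 2) + 1 = p + 3 - (k + 1) by omega, ih1 (by omega), ih2 (by omega)] at e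
      rw [pathSeq_rec g c k]
      linarith
  have hn := hpos (p + 2) (by omega) le_rfl
  have h1 := hrev (p + 2) (by omega)
  rw [show p + 3 - (p + 2) = 1 by omega, show pathSeq g c 1 = 1 from rfl] at h1
  have hn1 : pathSeq g c (p + 2) = 1 := by nlinarith
  simp only [hn1, one_mul] at hrev
  refine pathWeight_subadd hα hg hαg (hpos _ ha (by omega)) (hpos _ (by omega) (by omega))
    (hpos _ (by omega) (by omega)) (hpos _ (by omega) (by omega)) ?_
  obtain ⟨j, hj⟩ : ∃ j, p + 2 = a + b + 1 + (j + 1) - 1 := ⟨p + 1 - a - b, by omega⟩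
  have r1 := hrev (a + b + 1) (by omega)
  have r2 := hrev (a + 1) (by omega)
  rw [show p + 3 - (a + b + 1) = j + 1 by omega] at r1
  rw [show p + 3 - (a + 1) = b + j + 1 by omega] at r2
  have hs := pathSeq_spread g c b j
  have hx2 := hpos 2 (by omega) (by omega)
  have hA : 0 < 1 + g * pathSeq g c 2 := by positivity
  have hB : 0 < pathSeq g c b + g * pathSeq g c (b + 1) := by
    have := hpos b hb (by omega)
    have := hpos (b + 1) (by omega) (by omega)
    positivity
  have hC : 0 < pathSeq g c j + g * pathSeq g c (j + 1) := by
    have := hpos j (by omega) (by omega)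
    have := hpos (j + 1) (by omega) (by omega)
    positivity
  have hD := pos_of_mul_pos_right (hs ▸ mul_pos hB hC) hA.le
  rw [← r1, ← r2]
  linarith

end Recurrence

/-! ### Test vectors on rooted connected sets -/

section Rooted

variable {V : Type*} [Fintype V] [DecidableEq V]

/-- The vertex set `S` is connected from `r`: every proper subset of `S` containing `r` has an
edge leaving it inside `S`. -/
def RootedConn (G : SimpleGraph V) (S : Finset V) (r : V) : Prop :=
  ∀ T ⊆ S, r ∈ T → T ≠ S → ∃ u ∈ T, ∃ w ∈ S \ T, G.Adj u w

/-- `S` is spanned by a path of `G` starting at `r`, listed as `f 0, …, f (|S|-1)`. -/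
def HasPath (G : SimpleGraph V) (S : Finset V) (r : V) : Prop :=
  ∃ f : ℕ → V, f 0 = r ∧ (∀ i < S.card, f i ∈ S) ∧
    (∀ i < S.card, ∀ j < S.card, f i = f j → i = j) ∧
    ∀ i, i + 1 < S.card → G.Adj (f i) (f (i + 1))

/-- What the eigenvalue equation asks for at `v`: `lam * y v` off the root, and the weight of a
pendant path with `|S| - 1` vertices at the root. -/
def rootTarget (h : ℕ → ℝ) (lam : ℝ) (S : Finset V) (r : V) (y : V → ℝ) (v : V) : ℝ :=
  if v = r then h (S.card - 1) else lam * y v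

/-- Positive test vector on `S` with value `1` at the root, meeting `rootTarget` everywhere, and
exceeding it somewhere unless `S` is spanned by a path from the root. -/
def HasTest (G : SimpleGraph V) (α lam : ℝ) (h : ℕ → ℝ) (S : Finset V) (r : V) : Prop :=
  ∃ y : V → ℝ, (∀ v ∈ S, 0 < y v) ∧ y r = 1 ∧
    (∀ v ∈ S, rootTarget h lam S r y v ≤ nbSum G α S y v) ∧
    ((∃ v ∈ S, rootTarget h lam S r y v < nbSum G α S y v) ∨ HasPath G S r)

/-- Moving the root: if `S \ {r}` has a test vector rooted at a neighbour `c` of `r`, scale it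
by the ratio `t = x_m/x_{m+1}` that a pendant path with `m = |S| - 1` vertices would have. -/
lemma HasTest.extend {G : SimpleGraph V} {α lam : ℝ} (h0 : 0 ≤ α) (h1 : α < 1) {h : ℕ → ℝ}
    {S : Finset V} {r c : V} (hr : r ∈ S) (hc : c ∈ S.erase r) (hrc : G.Adj r c) {t : ℝ}
    (ht : 0 < t) (hh : h ((S.erase r).card) = α + (1 - α) * t)
    (hrec : lam * t = h ((S.erase r).card - 1) * t + α * t + (1 - α))
    (hT : HasTest G α lam h (S.erase r) c) : HasTest G α lam h S r := by
  classical
  obtain ⟨y, hy, hyc, hle, hst⟩ := hT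
  have hb : 0 < 1 - α := by linarith
  set S' := S.erase r with hS'
  have hrS' : r ∉ S' := notMem_erase r S
  have hcr : c ≠ r := ne_of_mem_erase hc
  have hSe : S = S' ∪ {r} := by
    ext v; by_cases hv : v = r <;> simp [hS', hv, hr]
  have hdisj : Disjoint S' {r} := by simp [hrS']
  have hcard : S.card - 1 = S'.card := by rw [hS', card_erase_of_mem hr]
  have hcard' : S.card = S'.card + 1 := by
    have := card_pos.2 ⟨r, hr⟩
    omega
  set z : V → ℝ := fun v => if v = r then 1 else t * y v with hz
  have hzr : z r = 1 := by simp [hz]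
  have hzS : ∀ v ∈ S', z v = t * y v := fun v hv => by
    simp [hz, ne_of_mem_erase hv]
  have hzpos : ∀ v ∈ S, 0 < z v := by
    intro v hv
    by_cases hvr : v = r
    · rw [hvr, hzr]; norm_num
    · have hv' : v ∈ S' := mem_erase.2 ⟨hvr, hv⟩
      rw [hzS v hv']
      exact mul_pos ht (hy v hv')
  have hnb : ∀ v ∈ S', nbSum G α S z v = t * nbSum G α S' y v + nbSum G α {r} z v := by
    intro v hv
    rw [hSe, nbSum_union hdisj, ← nbSum_smul,
      nbSum_congr (z := fun w => t * y w) (hzS v hv) hzS]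
  have hnonneg : ∀ v ∈ S, 0 ≤ nbSum G α {r} z v := by
    intro v hv
    have hv1 := hzpos v hv
    simp only [nbSum, sum_singleton, hzr]
    split_ifs
    · positivity
    · exact le_rfl
  -- the surplus at a vertex of `S'` is at least `t` times the old surplus
  have hkey : ∀ v ∈ S', rootTarget h lam S r z v +
      t * (nbSum G α S' y v - rootTarget h lam S' c y v) ≤ nbSum G α S z v := by
    intro v hv
    rw [hnb v hv, rootTarget, if_neg (ne_of_mem_erase hv), hzS v hv, rootTarget]
    split_ifs with hvc
    · subst hvc
      rw [nbSum_singleton hrc.symm, hzS v hv, hzr, hyc]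
      linarith
    · have := hnonneg v (mem_of_mem_erase hv)
      linarith
  refine ⟨z, hzpos, hzr, ?_, ?_⟩
  · intro v hv
    by_cases hvr : v = r
    · rw [hvr, rootTarget, if_pos rfl, hcard, hh]
      have := nbSum_mono (G := G) h0 h1 (S := {c}) (T := S) (y := z)
        (by simpa using mem_of_mem_erase hc) (fun v hv => (hzpos v hv).le) hr
      rw [nbSum_singleton hrc, hzr, hzS c hc, hyc] at this
      linarith
    · have hv' : v ∈ S' := mem_erase.2 ⟨hvr, hv⟩
      have := hkey v hv'
      have := mul_nonneg ht.le (sub_nonneg.2 (hle v hv'))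
      linarith
  · rcases hst with ⟨v, hv, hlt⟩ | ⟨f, hf0, hfS, hfi, hfa⟩
    · refine Or.inl ⟨v, mem_of_mem_erase hv, ?_⟩
      have := hkey v hv
      have := mul_pos ht (sub_pos.2 hlt)
      linarith
    · refine Or.inr ⟨fun i => if i = 0 then r else f (i - 1), by simp, ?_, ?_, ?_⟩
      · intro i hi
        rcases Nat.eq_zero_or_pos i with h | h
        · simpa [h] using hr
        · simp only [h.ne', if_false]
          exact mem_of_mem_erase (hfS _ (by omega))
      · intro i hi j hj hij
        rcases Nat.eq_zero_or_pos i with hi0 | hi0 <;> rcases Nat.eq_zero_or_pos j with hj0 | hj0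
        · omega
        · simp only [hi0, hj0.ne', if_true, if_false] at hij
          exact absurd (hij ▸ hfS (j - 1) (by omega)) hrS'
        · simp only [hj0, hi0.ne', if_true, if_false] at hij
          exact absurd (hij ▸ hfS (i - 1) (by omega)) hrS'
        · simp only [hi0.ne', hj0.ne', if_false] at hij
          have := hfi _ (by omega) _ (by omega) hij
          omega
      · intro i hi
        rcases Nat.eq_zero_or_pos i with h | h
        · simpa [h, hf0] using hrc
        · simp only [h.ne', if_false, Nat.add_eq_zero_iff, one_ne_zero, and_false,
            Nat.add_sub_cancel]
          have := hfa (i - 1) (by omega)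
          rwa [Nat.sub_add_cancel h] at this

/-- Gluing two test vectors at a common root. The weights add up at the root, where strict
subadditivity of `h` leaves a surplus. -/
lemma HasTest.glue {G : SimpleGraph V} {α lam : ℝ} (h0 : 0 ≤ α) (h1 : α < 1) {h : ℕ → ℝ}
    {S T : Finset V} {r : V} (hr : r ∈ S) (hTS : T ⊆ S.erase r)
    (hsub : h (S.card - 1) < h T.card + h (S.card - 1 - T.card))
    (hT1 : HasTest G α lam h (insert r T) r) (hT2 : HasTest G α lam h (S \ T) r) :
    HasTest G α lam h S r := by
  classical
  obtain ⟨y1, hy1, hr1, hle1, -⟩ := hT1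
  obtain ⟨y2, hy2, hr2, hle2, -⟩ := hT2
  have hrT : r ∉ T := fun h => notMem_erase r S (hTS h)
  have hTS' : T ⊆ S := hTS.trans (erase_subset _ _)
  set z : V → ℝ := fun v => if v ∈ T then y1 v else y2 v with hz
  have hz1 : ∀ v ∈ insert r T, z v = y1 v := by
    intro v hv
    rcases mem_insert.1 hv with rfl | hv
    · simp [hz, hrT, hr1, hr2]
    · simp [hz, hv]
  have hz2 : ∀ v ∈ S \ T, z v = y2 v := by
    intro v hv
    simp [hz, (mem_sdiff.1 hv).2]
  have hzpos : ∀ v ∈ S, 0 < z v := by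
    intro v hv
    by_cases hvT : v ∈ T
    · rw [hz1 v (mem_insert_of_mem hvT)]
      exact hy1 v (mem_insert_of_mem hvT)
    · rw [hz2 v (mem_sdiff.2 ⟨hv, hvT⟩)]
      exact hy2 v (mem_sdiff.2 ⟨hv, hvT⟩)
  have hrS2 : r ∈ S \ T := mem_sdiff.2 ⟨hr, hrT⟩
  have hzr : z r = 1 := by rw [hz2 r hrS2, hr2]
  have hins : insert r T ⊆ S := insert_subset hr hTS'
  have hroot : rootTarget h lam S r z r < nbSum G α S z r := by
    have e1 := hle1 r (mem_insert_self _ _)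
    have e2 := hle2 r hrS2
    rw [rootTarget, if_pos rfl, card_insert_of_notMem hrT, Nat.add_sub_cancel] at e1
    rw [rootTarget, if_pos rfl, card_sdiff_of_subset hTS',
      show S.card - T.card - 1 = S.card - 1 - T.card by omega] at e2
    have e3 : nbSum G α (insert r T) y1 r = nbSum G α T z r := by
      rw [← nbSum_congr (hz1 r (mem_insert_self _ _)) hz1, nbSum, sum_insert hrT]
      simp [nbSum]
    have e4 : nbSum G α S z r = nbSum G α T z r + nbSum G α (S \ T) z r := by
      rw [← nbSum_union disjoint_sdiff, union_sdiff_of_subset hTS']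
    rw [rootTarget, if_pos rfl, e4, ← e3, nbSum_congr (hz2 r hrS2) hz2]
    linarith
  refine ⟨z, hzpos, hzr, ?_, Or.inl ⟨r, hr, hroot⟩⟩
  intro v hv
  by_cases hvr : v = r
  · rw [hvr]; exact hroot.le
  rw [rootTarget, if_neg hvr]
  by_cases hvT : v ∈ T
  · have hv1 := mem_insert_of_mem (b := r) hvT
    have e := hle1 v hv1
    rw [rootTarget, if_neg hvr, ← nbSum_congr (hz1 v hv1) hz1, ← hz1 v hv1] at e
    exact e.trans (nbSum_mono h0 h1 hins (fun v hv => (hzpos v hv).le) hv)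
  · have hv1 : v ∈ S \ T := mem_sdiff.2 ⟨hv, hvT⟩
    have e := hle2 v hv1
    rw [rootTarget, if_neg hvr, ← nbSum_congr (hz2 v hv1) hz2, ← hz2 v hv1] at e
    exact e.trans (nbSum_mono h0 h1 sdiff_subset (fun v hv => (hzpos v hv).le) hv)

/-- Every connected rooted set with at most `p + 1` vertices has a test vector, by induction on its
size `k`: either the root has a neighbour from which the rest is connected, and `HasTest.extend`
applies, or the set splits at the root into two smaller connected pieces and `HasTest.glue`
applies. -/
lemma hasTest_of_rootedConn {G : SimpleGraph V} {α lam : ℝ} (h0 : 0 ≤ α) (h1 : α < 1)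
    {h t : ℕ → ℝ} {p : ℕ} (hz : h 0 = 0) (ht : ∀ m, 1 ≤ m → m ≤ p → 0 < t m)
    (hh : ∀ m, 1 ≤ m → m ≤ p → h m = α + (1 - α) * t m)
    (hrec : ∀ m, 1 ≤ m → m ≤ p → lam * t m = h (m - 1) * t m + α * t m + (1 - α))
    (hsub : ∀ a b, 1 ≤ a → 1 ≤ b → a + b ≤ p → h (a + b) < h a + h b) :
    ∀ (k : ℕ) (S : Finset V) (r : V), S.card = k → S.card ≤ p + 1 → r ∈ S → RootedConn G S r →
      HasTest G α lam h S r := by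
  classical
  intro k
  induction k using Nat.strong_induction_on with
  | _ k ih =>
  intro S r hk hcard hr hS
  by_cases hsing : S = {r}
  · subst hsing
    refine ⟨fun _ => 1, by simp, rfl, ?_, Or.inr ⟨fun _ => r, rfl, by simp, ?_, ?_⟩⟩
    · intro v hv
      rw [mem_singleton.1 hv]
      simp [rootTarget, hz, nbSum]
    · intro i hi j hj _
      simp only [card_singleton] at hi hj
      omega
    · intro i hi
      simp at hi
  obtain ⟨c', hc', c, hc, hadj⟩ := hS {r} (by simpa using hr) (mem_singleton_self _)
    (fun h => hsing h.symm)
  rw [mem_singleton.1 hc'] at hadj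
  have hce : c ∈ S.erase r := by
    rw [mem_sdiff, mem_singleton] at hc
    exact mem_erase.2 ⟨hc.2, hc.1⟩
  have hec : (S.erase r).card = S.card - 1 := card_erase_of_mem hr
  have hepos : 0 < (S.erase r).card := card_pos.2 ⟨c, hce⟩
  by_cases hconn : RootedConn G (S.erase r) c
  · exact HasTest.extend h0 h1 hr hce hadj (ht _ hepos (by omega)) (hh _ hepos (by omega))
      (hrec _ hepos (by omega)) (ih _ (by omega) _ c rfl (by omega) hce hconn)
  -- a union `T` of components of `S \ {r}`, not all of them, splits `S` at the root
  unfold RootedConn at hconn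
  push Not at hconn
  obtain ⟨T, hTS, hcT, hTne, hno⟩ := hconn
  have hTss : T ⊂ S.erase r := hTS.ssubset_of_ne hTne
  have hTcard := card_lt_card hTss
  have hTpos : 0 < T.card := card_pos.2 ⟨c, hcT⟩
  have hrT : r ∉ T := fun h => notMem_erase r S (hTS h)
  have hTS' : T ⊆ S := hTS.trans (erase_subset _ _)
  have hc2 : (S \ T).card = S.card - T.card := card_sdiff_of_subset hTS'
  have hc1 : (insert r T).card = T.card + 1 := card_insert_of_notMem hrT
  refine HasTest.glue h0 h1 hr hTS ?_ (ih _ ?_ _ r rfl ?_ (mem_insert_self _ _) ?_)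
    (ih _ ?_ _ r rfl ?_ (mem_sdiff.2 ⟨hr, hrT⟩) ?_)
  · have := hsub T.card (S.card - 1 - T.card) hTpos (by omega) (by omega)
    rwa [show T.card + (S.card - 1 - T.card) = S.card - 1 by omega] at this
  · omega
  · omega
  · intro U hU hrU hUne
    obtain ⟨u, hu, w, hw, huw⟩ := hS (U ∪ (S \ insert r T))
      (union_subset (hU.trans (insert_subset hr hTS')) sdiff_subset)
      (mem_union_left _ hrU) (by
        intro heq
        refine hUne (subset_antisymm hU fun v hv => ?_)
        have : v ∈ U ∪ (S \ insert r T) := by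
          rw [heq]
          exact insert_subset hr hTS' hv
        simpa [hv] using this)
    simp only [mem_sdiff, mem_union, mem_insert, not_or, not_and, not_not] at hw hu
    have hwT : w ∈ T := by
      rcases eq_or_ne w r with rfl | hwr
      · exact absurd hrU hw.2.1
      · by_contra hwT
        exact hwT (hw.2.2 hw.1 hwr)
    rcases hu with hu | hu
    · exact ⟨u, hu, w, by simp [hwT, hw.2.1], huw⟩
    · exact absurd huw.symm (hno w hwT u (by simp [hu.1, hu.2.1, hu.2.2]))
  · omega
  · omega
  · intro U hU hrU hUne
    obtain ⟨u, hu, w, hw, huw⟩ := hS (U ∪ T) (union_subset (hU.trans sdiff_subset) hTS')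
      (mem_union_left _ hrU) (by
        intro heq
        refine hUne (subset_antisymm hU fun v hv => ?_)
        have : v ∈ U ∪ T := heq ▸ (mem_sdiff.1 hv).1
        simpa [(mem_sdiff.1 hv).2] using this)
    simp only [mem_sdiff, mem_union, not_or] at hw hu
    rcases hu with hu | hu
    · exact ⟨u, hu, w, by simp [hw.1, hw.2.1, hw.2.2], huw⟩
    · refine absurd huw (hno u hu w ?_)
      simp only [mem_sdiff, mem_erase]
      exact ⟨⟨fun h => hw.2.1 (h ▸ hrU), hw.1⟩, hw.2.2⟩

end Rooted

/-! ### The Perron vector of `PK_{p,q}` -/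

section PK

lemma pk_adj {p q : ℕ} (i j : Fin (p + q)) :
    (pkGraph p q).Adj i j ↔ i.val ≠ j.val ∧
      ((i.val + 1 = j.val ∧ j.val ≤ p) ∨ (j.val + 1 = i.val ∧ i.val ≤ p) ∨
        (p ≤ i.val ∧ p ≤ j.val)) := by
  simp only [pkGraph, SimpleGraph.fromRel_adj, ne_eq, Fin.ext_iff]
  tauto

lemma pk_connected {p q : ℕ} (hq : 1 ≤ q) : (pkGraph p q).Connected := by
  have key : ∀ (k : ℕ) (hk : k < p + q), (pkGraph p q).Reachable ⟨k, hk⟩ ⟨0, by omega⟩ := by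
    intro k
    induction k using Nat.strong_induction_on with
    | _ k ih =>
    intro hk
    rcases Nat.eq_zero_or_pos k with rfl | hpos
    · exact SimpleGraph.Reachable.refl _
    by_cases hkp : k ≤ p
    · exact ((pk_adj ⟨k, hk⟩ ⟨k - 1, by omega⟩).2 (by simp; omega)).reachable.trans
        (ih (k - 1) (by omega) _)
    · exact ((pk_adj ⟨k, hk⟩ ⟨p, by omega⟩).2 (by simp; omega)).reachable.trans
        (ih p (by omega) _)
  have : Nonempty (Fin (p + q)) := ⟨⟨0, by omega⟩⟩
  exact ⟨fun i j => (key i i.2).trans (key j j.2).symm⟩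

/-- The eigenvalue equations of `PK_{p,q}` for its Perron vector, with entries indexed by `ℕ`. -/
lemma pk_perron_nat {p q : ℕ} (hq : 1 ≤ q) {α : ℝ} (h0 : 0 ≤ α) (h1 : α < 1) {lam : ℝ}
    (hlam : lam = rhoAlpha α (pkGraph p q)) :
    ∃ Y : ℕ → ℝ, (∀ k < p + q, 0 < Y k) ∧
      (1 ≤ p → lam * Y 0 = α * Y 0 + (1 - α) * Y 1) ∧
      (∀ k, k + 1 < p → lam * Y (k + 1) =
        2 * α * Y (k + 1) + (1 - α) * (Y k + Y (k + 2))) ∧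
      (∀ k < q, lam * Y (p + k) =
        (if 1 ≤ p ∧ k = 0 then α * Y p + (1 - α) * Y (p - 1) else 0) +
          ((q - 1) * α * Y (p + k) + (1 - α) * (∑ j ∈ range q, Y (p + j) - Y (p + k)))) := by
  classical
  obtain ⟨y, hy, hev⟩ := exists_perron (pk_connected (p := p) hq) h0 h1
  set Y : ℕ → ℝ := fun k => if h : k < p + q then y ⟨k, h⟩ else 0 with hY
  have hYi : ∀ i : Fin (p + q), y i = Y i.val := fun i => by simp [hY]
  have hsum : ∀ k < p + q, lam * Y k = ∑ j ∈ range (p + q),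
      if k ≠ j ∧ ((k + 1 = j ∧ j ≤ p) ∨ (j + 1 = k ∧ k ≤ p) ∨ (p ≤ k ∧ p ≤ j)) then
        α * Y k + (1 - α) * Y j else 0 := by
    intro k hk
    have := hev ⟨k, hk⟩
    rw [← hlam, nbSum, hYi] at this
    simp only [pk_adj, hYi] at this
    rw [this, ← Fin.sum_univ_eq_sum_range (fun j =>
      if k ≠ j ∧ ((k + 1 = j ∧ j ≤ p) ∨ (j + 1 = k ∧ k ≤ p) ∨ (p ≤ k ∧ p ≤ j)) then
        α * Y k + (1 - α) * Y j else 0)]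
  refine ⟨Y, fun k hk => by rw [← hYi ⟨k, hk⟩]; exact hy _, ?_, ?_, ?_⟩
  · intro hp
    rw [hsum 0 (by omega), sum_eq_single_of_mem 1 (by simp; omega)]
    · rw [if_pos (by omega)]
    · intro j _ hj
      exact if_neg (by omega)
  · intro k hk
    rw [hsum (k + 1) (by omega), ← sum_subset (s₁ := {k, k + 2})]
    · rw [sum_pair (by omega), if_pos (by omega), if_pos (by omega)]
      ring
    · intro j
      simp
      omega
    · intro j _ hj
      simp only [mem_insert, mem_singleton, not_or] at hj
      exact if_neg (by omega)
  · intro k hk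
    rw [hsum (p + k) (by omega), sum_range_add]
    congr 1
    · split_ifs with hc
      · obtain ⟨hp, rfl⟩ := hc
        rw [sum_eq_single_of_mem (p - 1) (by simp; omega)]
        · rw [if_pos (by omega)]; rfl
        · intro j hj hj'
          rw [mem_range] at hj
          exact if_neg (by omega)
      · refine sum_eq_zero fun j hj => ?_
        rw [mem_range] at hj
        exact if_neg (by omega)
    · have e : ∀ j ∈ range q, (if p + k ≠ p + j ∧ ((p + k + 1 = p + j ∧ p + j ≤ p) ∨
          (p + j + 1 = p + k ∧ p + k ≤ p) ∨ (p ≤ p + k ∧ p ≤ p + j)) then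
            α * Y (p + k) + (1 - α) * Y (p + j) else 0) =
          (α * Y (p + k) + (1 - α) * Y (p + j)) - if k = j then Y (p + k) else 0 := by
        intro j _
        by_cases hkj : k = j
        · subst hkj
          rw [if_neg (by omega), if_pos rfl]
          ring
        · rw [if_pos (by omega), if_neg hkj, sub_zero]
      rw [sum_congr rfl e, sum_sub_distrib, sum_add_distrib, sum_const, ← mul_sum,
        sum_ite_eq, if_pos (mem_range.2 hk), card_range, nsmul_eq_mul]
      ring

/-- Along the path the Perron vector of `PK_{p,q}` is proportional to `pathSeq`; `X` is its value
at the clique vertex carrying the path and `Z` its value at the other clique vertices. -/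
lemma pk_perron {p q : ℕ} (hq : 2 ≤ q) {α : ℝ} (h0 : 0 ≤ α) (h1 : α < 1) {lam g c : ℝ}
    (hlam : lam = rhoAlpha α (pkGraph p q)) (hg : (1 - α) * g = α)
    (hc : (1 - α) * c = lam - 2 * α) :
    (∀ k, 1 ≤ k → k ≤ p + 1 → 0 < pathSeq g c k) ∧ ∃ X Z : ℝ, 0 < X ∧ 0 < Z ∧
      lam * X = pathWeight α g c p * X + (q - 1) * (α * X + (1 - α) * Z) ∧
      lam * Z = (q - 1) * α * Z + (1 - α) * (X + (q - 2) * Z) := by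
  obtain ⟨Y, hpos, hY0, hY1, hY2⟩ := pk_perron_nat (p := p) (by omega : 1 ≤ q) h0 h1 hlam
  have hb : 0 < 1 - α := by linarith
  have hx : ∀ k, k ≤ p → Y k = Y 0 * pathSeq g c (k + 1) := by
    intro k
    induction k using Nat.twoStepInduction with
    | zero => intro _; simp [pathSeq]
    | one =>
      intro hp
      have := hY0 hp
      refine mul_left_cancel₀ hb.ne' ?_
      simp only [pathSeq]
      linear_combination (-1 : ℝ) * this - Y 0 * hc - Y 0 * hg
    | more k ih1 ih2 =>
      intro hk
      have := hY1 k (by omega)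
      rw [pathSeq_rec g c (k + 1)]
      refine mul_left_cancel₀ hb.ne' ?_
      have e1 := ih1 (by omega)
      have e2 := ih2 (by omega)
      linear_combination (-1 : ℝ) * this - (1 - α) * e1 + (1 - α) * c * e2 - Y (k + 1) * hc
  have hY0pos := hpos 0 (by omega)
  have hxpos : ∀ k, 1 ≤ k → k ≤ p + 1 → 0 < pathSeq g c k := by
    intro k hk hkp
    have h2 := hpos (k - 1) (by omega)
    rw [hx (k - 1) (by omega), Nat.sub_add_cancel hk] at h2
    exact pos_of_mul_pos_right h2 hY0pos.le
  refine ⟨hxpos, Y p, Y (p + 1), hpos _ (by omega), hpos _ (by omega), ?_⟩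
  set Sg := ∑ j ∈ range q, Y (p + j) with hSg
  have hSgpos : 0 < Sg := sum_pos (fun j hj => hpos _ (by rw [mem_range] at hj; omega))
    ⟨0, by simp; omega⟩
  have hall : ∀ k, 1 ≤ k → k < q →
      (lam - (q - 1) * α + (1 - α)) * Y (p + k) = (1 - α) * Sg := by
    intro k hk hkq
    have := hY2 k hkq
    rw [if_neg (by omega)] at this
    linear_combination this
  have hcoef : (lam - (q - 1) * α + (1 - α)) ≠ 0 := by
    intro h
    have := hall 1 le_rfl (by omega)
    rw [h, zero_mul] at this
    exact (mul_pos hb hSgpos).ne this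
  have hconst : ∀ k, 1 ≤ k → k < q → Y (p + k) = Y (p + 1) := fun k hk hkq =>
    mul_left_cancel₀ hcoef ((hall k hk hkq).trans (hall 1 le_rfl (by omega)).symm)
  have hSgv : Sg = Y p + (q - 1) * Y (p + 1) := by
    obtain ⟨q', rfl⟩ : ∃ q', q = q' + 1 := ⟨q - 1, by omega⟩
    rw [hSg, sum_range_succ']
    rw [sum_congr rfl (fun j hj => hconst (j + 1) (by omega) (by rw [mem_range] at hj; omega))]
    simp
    ring
  constructor
  · have := hY2 0 (by omega)
    rw [hSgv] at this
    simp only [add_zero, and_true] at this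
    rcases Nat.eq_zero_or_pos p with hp | hp
    · subst hp
      simp only [nonpos_iff_eq_zero, one_ne_zero, if_false] at this
      simp only [pathWeight, pathSeq, zero_add]
      linear_combination this + Y 0 * hg
    · rw [if_pos (by omega)] at this
      have e1 := hx (p - 1) (by omega)
      rw [Nat.sub_add_cancel hp] at e1
      have e2 := hx p le_rfl
      have e3 := hxpos (p + 1) (by omega) le_rfl
      have e4 : pathSeq g c p / pathSeq g c (p + 1) * Y p = Y (p - 1) := by
        rw [e1, e2]
        field_simp
      unfold pathWeight
      linear_combination this - (1 - α) * e4
  · have := hall 1 le_rfl (by omega)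
    rw [hSgv] at this
    linear_combination this

lemma pathWeight_nonneg {α g c : ℝ} (h0 : 0 ≤ α) (h1 : α < 1) (hg : (1 - α) * g = α) {p : ℕ}
    (hpos : ∀ k, 1 ≤ k → k ≤ p + 1 → 0 < pathSeq g c k) : 0 ≤ pathWeight α g c p := by
  rcases Nat.eq_zero_or_pos p with hp | hp
  · subst hp
    simp [pathWeight, pathSeq, hg]
  · have := hpos p hp (by omega)
    have := hpos (p + 1) (by omega) le_rfl
    have : 0 < 1 - α := by linarith
    unfold pathWeight
    positivity

/-- The two clique equations of `pk_perron`, with `Q = q` and `w` the weight of the path, force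
`λ ≥ q - 1`, the index of `K_q`. -/
lemma sub_one_le_lam {α lam w Q X Z : ℝ} (h1 : α < 1) (hQ : 1 < Q) (hw : 0 ≤ w) (hX : 0 < X)
    (hZ : 0 < Z) (eX : lam * X = w * X + (Q - 1) * (α * X + (1 - α) * Z))
    (eZ : lam * Z = (Q - 1) * α * Z + (1 - α) * (X + (Q - 2) * Z)) : Q - 1 ≤ lam := by
  by_contra! hlt
  have hb : 0 < 1 - α := by linarith
  have hZX : X < Z := by
    have : (Q - 1 - lam) * Z = (1 - α) * (Z - X) := by linear_combination -eZ
    have h2 : 0 < (1 - α) * (Z - X) := this ▸ mul_pos (by linarith) hZ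
    linarith [pos_of_mul_pos_right h2 hb.le]
  have hXZ : Z < X := by
    have : (Q - 1 - lam) * X + w * X = (1 - α) * (Q - 1) * (X - Z) := by linear_combination -eX
    have h2 : 0 < (1 - α) * (Q - 1) * (X - Z) := by
      rw [← this]
      have := mul_pos (show 0 < Q - 1 - lam by linarith) hX
      positivity
    have h3 : 0 < (1 - α) * (Q - 1) := mul_pos hb (by linarith)
    linarith [pos_of_mul_pos_right h2 h3.le]
  linarith

end PK

/-! ### Comparison with `PK_{p,q}` -/

section Compare

variable {V : Type*} [Fintype V] [DecidableEq V]

lemma nbSum_const {G : SimpleGraph V} {α B : ℝ} {T : Finset V} {z : V → ℝ} {v : V}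
    (hadj : ∀ w ∈ T, G.Adj v w) (hB : ∀ w ∈ T, z w = B) :
    nbSum G α T z v = T.card * (α * z v + (1 - α) * B) := by
  unfold nbSum
  rw [sum_congr rfl (g := fun _ => α * z v + (1 - α) * B)
    (fun w hw => by rw [if_pos (hadj w hw), hB w hw]), sum_const, nsmul_eq_mul]

/-- A clique together with a path spanning the rest and starting in the clique contains a
spanning copy of `PK_{p,q}`. -/
lemma exists_equiv_of_hasPath {G : SimpleGraph V} {p q : ℕ} {K : Finset V}
    (hK : G.IsNClique q K) (hcard : Fintype.card V = p + q) {r : V} (hr : r ∈ K)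
    (hP : HasPath G (univ \ K.erase r) r) :
    ∃ e : Fin (p + q) ≃ V, ∀ i j, (pkGraph p q).Adj i j → G.Adj (e i) (e j) := by
  classical
  obtain ⟨f, hf0, hfS, hfi, hfa⟩ := hP
  have hq : K.card = q := hK.card_eq
  have hqpos : 0 < K.card := card_pos.2 ⟨r, hr⟩
  have hKe : (K.erase r).card = q - 1 := by rw [card_erase_of_mem hr, hq]
  have hS : (univ \ K.erase r).card = p + 1 := by
    rw [card_sdiff_of_subset (subset_univ _), card_univ, hcard, hKe]
    omega
  rw [hS] at hfS hfi hfa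
  set en := (K.erase r).equivFinOfCardEq hKe with hen
  set φ : Fin (p + q) → V := fun i =>
    if h : i.val ≤ p then f (p - i.val) else (en.symm ⟨i.val - p - 1, by omega⟩ : V) with hφ
  have hlo : ∀ i : Fin (p + q), i.val ≤ p → φ i = f (p - i.val) := fun i hi => by
    simp [hφ, hi]
  have hhi : ∀ i : Fin (p + q), (hi : ¬ i.val ≤ p) →
      φ i = (en.symm ⟨i.val - p - 1, by omega⟩ : V) := fun i hi => by
    simp [hφ, hi]
  have hhiK : ∀ i : Fin (p + q), ¬ i.val ≤ p → φ i ∈ K.erase r := fun i hi => by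
    rw [hhi i hi]
    exact (en.symm _).2
  have hloS : ∀ i : Fin (p + q), i.val ≤ p → φ i ∉ K.erase r := fun i hi => by
    rw [hlo i hi]
    exact (mem_sdiff.1 (hfS _ (by omega))).2
  have hinj : Function.Injective φ := by
    intro i j hij
    by_cases hi : i.val ≤ p <;> by_cases hj : j.val ≤ p
    · rw [hlo i hi, hlo j hj] at hij
      have := hfi _ (by omega) _ (by omega) hij
      exact Fin.ext (by omega)
    · exact absurd (hij ▸ hhiK j hj) (hloS i hi)
    · exact absurd (hij ▸ hhiK i hi) (hloS j hj)
    · rw [hhi i hi, hhi j hj] at hij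
      have := en.symm.injective (Subtype.ext hij)
      simp only [Fin.mk.injEq] at this
      exact Fin.ext (by omega)
  have hbij : Function.Bijective φ :=
    (Fintype.bijective_iff_injective_and_card φ).2 ⟨hinj, by simp [hcard]⟩
  have hclq : ∀ i : Fin (p + q), p ≤ i.val → φ i ∈ K := by
    intro i hi
    rcases hi.eq_or_lt with h | h
    · rw [hlo i h.ge, ← h, Nat.sub_self, hf0]
      exact hr
    · exact mem_of_mem_erase (hhiK i (by omega))
  have hstep : ∀ i j : Fin (p + q), i.val + 1 = j.val → j.val ≤ p → G.Adj (φ i) (φ j) := by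
    intro i j hij hj
    rw [hlo i (by omega), hlo j hj, show p - i.val = p - j.val + 1 by omega]
    exact (hfa _ (by omega)).symm
  refine ⟨Equiv.ofBijective φ hbij, fun i j hij => ?_⟩
  change G.Adj (φ i) (φ j)
  rw [pk_adj] at hij
  obtain ⟨hne, ⟨h, h'⟩ | ⟨h, h'⟩ | ⟨h, h'⟩⟩ := hij
  · exact hstep i j h h'
  · exact (hstep j i h h').symm
  · exact hK.isClique (hclq i h) (hclq j h') (fun he => hne (by rw [hinj he]))

/-- The case where everything outside a `q`-clique hangs off a single clique vertex `r`. -/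
lemma compare_of_rootedConn {G : SimpleGraph V} {p q : ℕ} (hq : 2 ≤ q) {α lam g c : ℝ}
    (h0 : 0 ≤ α) (h1 : α < 1) (hlam : lam = rhoAlpha α (pkGraph p q)) (hg : (1 - α) * g = α)
    (hc : (1 - α) * c = lam - 2 * α)
    (hsub : ∀ a b, 1 ≤ a → 1 ≤ b → a + b ≤ p →
      pathWeight α g c (a + b) < pathWeight α g c a + pathWeight α g c b)
    {K : Finset V} (hK : G.IsNClique q K) (hcard : Fintype.card V = p + q) {r : V} (hr : r ∈ K)
    (hconn : RootedConn G (univ \ K.erase r) r) :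
    lam ≤ rhoAlpha α G ∧ (rhoAlpha α G = lam → Nonempty (G ≃g pkGraph p q)) := by
  classical
  obtain ⟨hpos, X, Z, hX, hZ, eX, eZ⟩ := pk_perron hq h0 h1 hlam hg hc
  have hqK : K.card = q := hK.card_eq
  have hKe : (K.erase r).card = q - 1 := by rw [card_erase_of_mem hr, hqK]
  set S := univ \ K.erase r with hS
  have hScard : S.card = p + 1 := by
    rw [hS, card_sdiff_of_subset (subset_univ _), card_univ, hcard, hKe]
    omega
  have hrS : r ∈ S := by simp [hS]
  have hT : HasTest G α lam (pathWeight α g c) S r := by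
    refine hasTest_of_rootedConn h0 h1 (t := fun m => pathSeq g c m / pathSeq g c (m + 1)) (p := p)
      ?_ ?_ ?_ ?_ hsub _ S r rfl hScard.le hrS hconn
    · simp [pathWeight, pathSeq, hg]
    · intro m hm hmp
      exact div_pos (hpos m hm (by omega)) (hpos _ (by omega) (by omega))
    · intro m _ _
      rfl
    · intro m hm hmp
      obtain ⟨k, rfl⟩ : ∃ k, m = k + 1 := ⟨m - 1, by omega⟩
      have e1 := hpos (k + 1) (by omega) (by omega)
      have e2 := hpos (k + 1 + 1) (by omega) (by omega)
      have e3 : pathSeq g c (k + 1 + 1) = c * pathSeq g c (k + 1) - pathSeq g c k := rfl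
      simp only [Nat.add_sub_cancel, pathWeight]
      field_simp
      rw [e3]
      linear_combination pathSeq g c (k + 1) * (-hc)
  obtain ⟨y, hy, hyr, hle, hst⟩ := hT
  set z : V → ℝ := fun v => if v ∈ S then X * y v else Z with hz
  have hzS : ∀ v ∈ S, z v = X * y v := fun v hv => by simp [hz, hv]
  have hzK : ∀ v ∈ K.erase r, z v = Z := fun v hv => by
    have : v ∉ S := by simpa [hS] using hv
    simp [hz, this]
  have hzr : z r = X := by rw [hzS r hrS, hyr, mul_one]
  have hmem : ∀ v, v ∉ S → v ∈ K.erase r := fun v hv => by simpa [hS] using hv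
  have hzpos : ∀ v, 0 < z v := by
    intro v
    by_cases hv : v ∈ S
    · rw [hzS v hv]; exact mul_pos hX (hy v hv)
    · rw [hzK v (hmem v hv)]; exact hZ
  -- the surplus at a vertex of `S` is inherited from the rooted test vector
  have hkey : ∀ v ∈ S, lam * z v + X * (nbSum G α S y v -
      rootTarget (pathWeight α g c) lam S r y v) ≤ nbSum G α univ z v := by
    intro v hv
    have e1 : nbSum G α S z v = X * nbSum G α S y v := by
      rw [← nbSum_smul, nbSum_congr (hzS v hv) hzS]
    by_cases hvr : v = r
    · subst hvr
      have e2 : nbSum G α univ z v = nbSum G α S z v + nbSum G α (K.erase v) z v := by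
        rw [← nbSum_union (by rw [hS]; exact sdiff_disjoint), hS,
          sdiff_union_of_subset (subset_univ _)]
      have e3 : nbSum G α (K.erase v) z v = (K.erase v).card * (α * z v + (1 - α) * Z) :=
        nbSum_const (fun w hw => hK.isClique hr (mem_of_mem_erase hw) (ne_of_mem_erase hw).symm)
          hzK
      rw [e2, e3, e1, hKe, rootTarget, if_pos rfl, hScard, Nat.add_sub_cancel, hzr,
        Nat.cast_sub (by omega), Nat.cast_one]
      linarith
    · have e2 : nbSum G α S z v ≤ nbSum G α univ z v :=
        nbSum_mono h0 h1 (subset_univ _) (fun v _ => (hzpos v).le) (mem_univ _)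
      rw [rootTarget, if_neg hvr]
      rw [e1] at e2
      rw [hzS v hv]
      linarith
  have htest := le_rho_of_test (G := G) (α := α) (t := lam) (y := z) (fun v => (hzpos v).le)
    ⟨r, (hzpos r).ne'⟩ (by
      intro v _
      by_cases hv : v ∈ S
      · have := hkey v hv
        have := mul_nonneg hX.le (sub_nonneg.2 (hle v hv))
        linarith
      · have hvK := hmem v hv
        have hvr := ne_of_mem_erase hvK
        have hvK' := mem_of_mem_erase hvK
        have e1 : nbSum G α ({r} ∪ (K.erase r).erase v) z v ≤ nbSum G α univ z v :=
          nbSum_mono h0 h1 (subset_univ _) (fun v _ => (hzpos v).le) (mem_univ _)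
        rw [nbSum_union (by simp), nbSum_singleton (hK.isClique hvK' hr hvr),
          nbSum_const (B := Z) (fun w hw => hK.isClique hvK'
            (mem_of_mem_erase (mem_of_mem_erase hw)) (ne_of_mem_erase hw).symm)
            (fun w hw => hzK w (mem_of_mem_erase hw)), card_erase_of_mem hvK, hKe, hzr,
          hzK v hvK, show q - 1 - 1 = q - 2 by omega, Nat.cast_sub hq] at e1
        rw [hzK v hvK]
        push_cast at e1
        linarith)
  refine ⟨htest.1, fun heq => ?_⟩
  rcases hst with ⟨v, hv, hlt⟩ | hP
  · refine absurd heq (htest.2 ⟨v, hzpos v, ?_⟩).ne'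
    have := hkey v hv
    have := mul_pos hX (sub_pos.2 hlt)
    linarith
  · obtain ⟨e, he⟩ := exists_equiv_of_hasPath hK hcard hr hP
    exact (rho_mono (pk_connected (by omega)) h0 h1 e he).2 (heq.trans hlam)

/-- The inequality behind `two_pendants`: a clique with pendant vertices at two of its vertices
beats a clique with one pendant path of any length. Here `C = (λ-(Q-1)α)/(1-α) + 1`, `t` is the
ratio of the last path entry to the root entry, and `s` the same ratio for one pendant vertex. -/
lemma two_pendants_ineq {g c C Q t s X Z : ℝ} (hg : 0 ≤ g) (hQ : 3 ≤ Q) (ht : 0 < t) (ht1 : t < 1)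
    (hX : 0 < X) (hZ : 0 < Z) (hcC : c = C - 1 + g * (Q - 3)) (hct : c * t < 1 + t ^ 2)
    (hs : (c + g) * s = 1) (hst : s ≤ t)
    (eX : (C - (g + t)) * X = X + (Q - 1) * Z) (eZ : C * Z = X + (Q - 1) * Z) :
    0 < C ∧ 0 < C - (g + s) ∧ (C - Q + 2) * (C - (g + s)) < 2 * C := by
  set e := C - (Q - 1) with he
  have heZ : e * Z = X := by rw [he]; linarith
  have hepos : 0 < e := pos_of_mul_pos_left (heZ ▸ hX) hZ.le
  have hC : C = e + (Q - 1) := by rw [he]; ring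
  have hCpos : 0 < C := by rw [hC]; linarith
  have heC : (C - (g + t)) * e = C := by
    refine mul_right_cancel₀ hZ.ne' ?_
    rw [mul_assoc, heZ, eX, eZ]
  have hCu : 0 < C - (g + t) := pos_of_mul_pos_left (by rw [heC]; exact hCpos) hepos.le
  refine ⟨hCpos, by linarith, ?_⟩
  have hce : e + 1 ≤ c := by
    have := mul_nonneg hg (show 0 ≤ Q - 3 by linarith)
    rw [hcC, hC]; linarith
  have hcg : 0 < c + g := by linarith
  have hspos : 0 < s := pos_of_mul_pos_right (hs ▸ one_pos) hcg.le
  -- `δ = t - s` satisfies `δ (1 + t u) ≤ t² u` with `u = g + t`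
  have hδ : (t - s) * (1 + t * (g + t)) ≤ t ^ 2 * (g + t) := by
    have : t * ((c + g) * s) ≤ s * (1 + t ^ 2 + g * t) := by nlinarith
    rw [hs] at this
    nlinarith
  have hu : 0 < g + t := by linarith
  have h2 : (e + 1) * t ^ 2 < 1 + t * (g + t) := by
    have h3 : (e + 1) * t ≤ 1 + t ^ 2 := by nlinarith
    have h4 : (e + 1) * t ^ 2 ≤ t * (1 + t ^ 2) := by nlinarith
    nlinarith [mul_nonneg ht.le hg, mul_pos (show 0 < 1 - t by linarith)
      (show 0 < 1 + t ^ 2 by positivity)]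
  have h5 : (e + 1) * (t - s) < g + t := by
    have hP : 0 < 1 + t * (g + t) := by positivity
    have h6 : (e + 1) * ((t - s) * (1 + t * (g + t))) ≤ (e + 1) * (t ^ 2 * (g + t)) :=
      mul_le_mul_of_nonneg_left hδ (by linarith)
    have h7 : (e + 1) * t ^ 2 * (g + t) < (1 + t * (g + t)) * (g + t) :=
      mul_lt_mul_of_pos_right h2 hu
    refine lt_of_mul_lt_mul_right (a := 1 + t * (g + t)) ?_ hP.le
    linarith
  have h8 : C - Q + 2 = e + 1 := by rw [he]; ring
  rw [h8]
  nlinarith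

/-- Two vertices of a `q`-clique with neighbours `a`, `a'` outside the clique (possibly `a = a'`)
already push the index above that of `PK_{p,q}` when `q ≥ 3`. -/
lemma two_pendants {G : SimpleGraph V} {p q : ℕ} (hp : 1 ≤ p) (hq : 3 ≤ q) {α lam g c : ℝ}
    (h0 : 0 ≤ α) (h1 : α < 1) (hlam : lam = rhoAlpha α (pkGraph p q)) (hg : (1 - α) * g = α)
    (hc : (1 - α) * c = lam - 2 * α) (hc2 : 2 ≤ c) {K : Finset V} (hK : G.IsNClique q K)
    {r r' a a' : V} (hr : r ∈ K) (hr' : r' ∈ K) (hrr : r ≠ r') (ha : a ∉ K) (ha' : a' ∉ K)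
    (hra : G.Adj r a) (hra' : G.Adj r' a') : lam < rhoAlpha α G := by
  classical
  obtain ⟨hpos, X, Z, hX, hZ, eX, eZ⟩ := pk_perron (by omega : 2 ≤ q) h0 h1 hlam hg hc
  have hb : 0 < 1 - α := by linarith
  have hg0 : 0 ≤ g := by
    by_contra! h
    nlinarith
  have hQ : (3 : ℝ) ≤ q := by exact_mod_cast hq
  have hxp := hpos p hp (by omega)
  have hxp1 := hpos (p + 1) (by omega) le_rfl
  obtain ⟨k, rfl⟩ : ∃ k, p = k + 1 := ⟨p - 1, by omega⟩
  set t := pathSeq g c (k + 1) / pathSeq g c (k + 1 + 1) with ht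
  have hts : t * pathSeq g c (k + 1 + 1) = pathSeq g c (k + 1) := by rw [ht]; field_simp
  have htpos : 0 < t := div_pos hxp hxp1
  have ht1 : t < 1 := by
    rw [ht, div_lt_one hxp1]
    have := (pathSeq_increasing hg0 hc2 k).2
    have e : pathSeq g c (k + 1 + 1) = pathSeq g c (k + 2) := rfl
    linarith
  have hcg : 0 < c + g := by linarith
  set s := (c + g)⁻¹ with hs
  have hs1 : (c + g) * s = 1 := mul_inv_cancel₀ hcg.ne'
  have hspos : 0 < s := inv_pos.2 hcg
  have hst : s ≤ t := by
    have e : pathSeq g c (k + 1 + 1) = c * pathSeq g c (k + 1) - pathSeq g c k := rfl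
    have e2 : 0 ≤ pathSeq g c k + g * pathSeq g c (k + 1) := by
      rcases Nat.eq_zero_or_pos k with hk | hk
      · simp [hk, pathSeq]
      · have := hpos k hk (by omega)
        positivity
    have e3 : pathSeq g c (k + 1 + 1) ≤ (c + g) * pathSeq g c (k + 1) := by linarith
    rw [ht, hs, inv_eq_one_div, div_le_div_iff₀ hcg hxp1]
    linarith
  have hct : c * t < 1 + t ^ 2 := by
    have e1 := pathSeq_logConcave (g := g) (c := c) (k + 1)
    have e2 : pathSeq g c (k + 1 + 2) = c * pathSeq g c (k + 1 + 1) - pathSeq g c (k + 1) := rfl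
    have e3 : 0 < 1 + g * pathSeq g c 2 := by
      have := hpos 2 (by omega) (by omega)
      positivity
    rw [e2, ← hts] at e1
    rw [← e1] at e3
    have e4 : 0 < pathSeq g c (k + 1 + 1) ^ 2 * (1 + t ^ 2 - c * t) := by
      refine e3.trans_eq ?_
      ring
    linarith [pos_of_mul_pos_right e4 (sq_nonneg _)]
  set C := c + 1 - g * ((q : ℝ) - 3) with hC
  have hCb : (1 - α) * C = lam - (q - 1) * α + (1 - α) := by
    rw [hC]
    linear_combination hc - ((q : ℝ) - 3) * hg
  have eX' : (C - (g + t)) * X = X + (q - 1) * Z := by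
    refine mul_left_cancel₀ hb.ne' ?_
    unfold pathWeight at eX
    rw [← ht] at eX
    linear_combination eX + X * hCb - X * hg
  have eZ' : C * Z = X + (q - 1) * Z := by
    refine mul_left_cancel₀ hb.ne' ?_
    linear_combination eZ + Z * hCb
  obtain ⟨hCpos, hBpos, hineq⟩ := two_pendants_ineq hg0 hQ htpos ht1 hX hZ
    (by rw [hC]; ring) hct hs1 hst eX' eZ'
  set B := C - (g + s) with hB
  set z : V → ℝ := fun v => if v = r ∨ v = r' then C else if v ∈ K then B
    else if v = a ∨ v = a' then s * C else 0 with hz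
  have hqK : K.card = q := hK.card_eq
  have har : a ≠ r := fun h => ha (h ▸ hr)
  have har' : a ≠ r' := fun h => ha (h ▸ hr')
  have hanr : a' ≠ r := fun h => ha' (h ▸ hr)
  have hanr2 : a' ≠ r' := fun h => ha' (h ▸ hr')
  have zr : z r = C := by simp [hz]
  have zr' : z r' = C := by simp [hz]
  have za : z a = s * C := by simp [hz, har, har', ha]
  have za' : z a' = s * C := by simp [hz, hanr, hanr2, ha']
  set L := (K.erase r).erase r' with hL
  have hr'e : r' ∈ K.erase r := mem_erase.2 ⟨hrr.symm, hr'⟩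
  have hLcard : (L.card : ℝ) = q - 2 := by
    rw [hL, card_erase_of_mem hr'e, card_erase_of_mem hr, hqK,
      show q - 1 - 1 = q - 2 by omega, Nat.cast_sub (by omega)]
    norm_num
  have zL : ∀ v ∈ L, z v = B := by
    intro v hv
    simp only [hL, mem_erase] at hv
    simp [hz, hv.1, hv.2.1, hv.2.2]
  have hLK : ∀ v ∈ L, v ∈ K := fun v hv => mem_of_mem_erase (mem_of_mem_erase hv)
  have hrL : r ∉ L := by simp [hL]
  have hr'L : r' ∉ L := by simp [hL]
  have hzn : ∀ v, 0 ≤ z v := by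
    intro v
    simp only [hz]
    split_ifs <;> positivity
  have hmono : ∀ (T : Finset V) v, nbSum G α T z v ≤ nbSum G α univ z v := fun T v =>
    nbSum_mono h0 h1 (subset_univ _) (fun v _ => hzn v) (mem_univ _)
  -- the pendant vertices satisfy the eigenvalue equation exactly
  have hpend : ∀ u w, G.Adj u w → z u = C → z w = s * C →
      lam * z w ≤ nbSum G α univ z w := by
    intro u w huw hu hw
    have e := hmono {u} w
    rw [nbSum_singleton huw.symm, hu, hw] at e
    rw [hw]
    refine le_of_eq_of_le ?_ e
    linear_combination (-(s * C)) * hc - (s * C) * hg + (1 - α) * C * hs1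
  have hroot : ∀ u u' w, u ∈ K → u' ∈ K → u ≠ u' → w ∉ K → G.Adj u w → z u = C → z u' = C →
      z w = s * C → u ∉ L → u' ∉ L → lam * z u < nbSum G α univ z u := by
    intro u u' w hu hu' huu hw huw zu zu' zw huL hu'L
    have e := hmono ({w} ∪ ({u'} ∪ L)) u
    have hwL : w ∉ L := fun h => hw (hLK w h)
    have hwu : w ≠ u' := fun h => hw (h ▸ hu')
    rw [nbSum_union (by simp [hwL, hwu]), nbSum_union (by simp [hu'L]), nbSum_singleton huw,
      nbSum_singleton (hK.isClique hu hu' huu), nbSum_const (fun v hv =>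
        hK.isClique hu (hLK v hv) (fun h => huL (h ▸ hv))) zL, hLcard, zu, zu', zw] at e
    rw [zu]
    refine lt_of_lt_of_le ?_ e
    have h2 := mul_lt_mul_of_pos_left hineq (mul_pos hb hCpos)
    have h3 : α * C + (1 - α) * (s * C) + (α * C + (1 - α) * C +
        ((q : ℝ) - 2) * (α * C + (1 - α) * B)) - lam * C =
        (1 - α) * (2 * C - (C - q + 2) * B) := by
      have : lam = (1 - α) * C + (q - 1) * α - (1 - α) := by linarith
      rw [this, hB]
      linear_combination (-C) * hg
    have h4 : 0 < (1 - α) * (2 * C - (C - q + 2) * B) := mul_pos hb (by linarith)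
    linarith
  have hinner : ∀ v ∈ L, lam * z v ≤ nbSum G α univ z v := by
    intro v hv
    have hvr : v ≠ r := fun h => hrL (h ▸ hv)
    have hvr' : v ≠ r' := fun h => hr'L (h ▸ hv)
    have e := hmono ({r} ∪ ({r'} ∪ L.erase v)) v
    rw [nbSum_union (by simp [hrr, hrL]), nbSum_union (by simp [hr'L]),
      nbSum_singleton (hK.isClique (hLK v hv) hr hvr),
      nbSum_singleton (hK.isClique (hLK v hv) hr' hvr'), nbSum_const (B := B) (fun w hw =>
        hK.isClique (hLK v hv) (hLK w (mem_of_mem_erase hw)) (ne_of_mem_erase hw).symm)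
        (fun w hw => zL w (mem_of_mem_erase hw)), card_erase_of_mem hv,
      Nat.cast_sub (card_pos.2 ⟨v, hv⟩), hLcard, zr, zr', zL v hv] at e
    rw [zL v hv]
    refine le_trans ?_ e
    have : lam = (1 - α) * C + (q - 1) * α - (1 - α) := by linarith
    have h4 : 0 < (1 - α) * (2 * C - (C - q + 2) * B) := mul_pos hb (by linarith)
    rw [this]
    push_cast
    linarith
  have hrr0 := hroot r r' a hr hr' hrr ha hra zr zr' za hrL hr'L
  refine (le_rho_of_test (G := G) (α := α) (t := lam) (y := z) hzn ⟨r, by rw [zr]; exact hCpos.ne'⟩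
    ?_).2 ⟨r, by rw [zr]; exact hCpos, hrr0⟩
  intro v hv
  by_cases e1 : v = r
  · rw [e1]; exact hrr0.le
  by_cases e2 : v = r'
  · rw [e2]; exact (hroot r' r a' hr' hr hrr.symm ha' hra' zr' zr za' hr'L hrL).le
  by_cases e3 : v ∈ K
  · exact hinner v (mem_erase.2 ⟨e2, mem_erase.2 ⟨e1, e3⟩⟩)
  by_cases e4 : v = a
  · rw [e4]; exact hpend r a hra zr za
  by_cases e5 : v = a'
  · rw [e5]; exact hpend r' a' hra' zr' za'
  · simp [hz, e1, e2, e3, e4, e5] at hv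

/-- Case `q = 2`: the clique is chosen as an edge `r₀r` for which `G - r₀` is connected. -/
lemma compare_two {G : SimpleGraph V} (hG : G.Connected) {p : ℕ}
    (hcard : Fintype.card V = p + 2) {α lam g c : ℝ} (h0 : 0 ≤ α) (h1 : α < 1)
    (hlam : lam = rhoAlpha α (pkGraph p 2)) (hg0 : 0 ≤ g) (hg : (1 - α) * g = α)
    (hc : (1 - α) * c = lam - 2 * α) :
    lam ≤ rhoAlpha α G ∧ (rhoAlpha α G = lam → Nonempty (G ≃g pkGraph p 2)) := by
  classical
  have hb : 0 < 1 - α := by linarith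
  obtain ⟨hpos, X, Z, hX, hZ, eX, eZ⟩ := pk_perron le_rfl h0 h1 hlam hg hc
  have hxp1 := hpos (p + 1) (by omega) le_rfl
  have e2 : pathSeq g c (p + 2) = c * pathSeq g c (p + 1) - pathSeq g c p := rfl
  have e3 : pathSeq g c (p + 3) = c * pathSeq g c (p + 2) - pathSeq g c (p + 1) := rfl
  -- the entry `x_{p+2}` of the recurrence is the value at the second clique vertex
  have hx2 : pathSeq g c (p + 2) * X = pathSeq g c (p + 1) * Z := by
    have e4 : pathSeq g c p / pathSeq g c (p + 1) * pathSeq g c (p + 1) = pathSeq g c p := by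
      field_simp
    unfold pathWeight at eX
    refine mul_left_cancel₀ hb.ne' ?_
    rw [e2]
    push_cast at eX
    linear_combination pathSeq g c (p + 1) * eX + pathSeq g c (p + 1) * X * hc +
      (1 - α) * X * e4
  have hx2pos : 0 < pathSeq g c (p + 2) :=
    pos_of_mul_pos_left (hx2 ▸ mul_pos hxp1 hZ) hX.le
  have hend : pathSeq g c (p + 3) = -g * pathSeq g c (p + 2) := by
    refine mul_right_cancel₀ (mul_pos hb hZ).ne' ?_
    rw [e3]
    push_cast at eZ
    linear_combination pathSeq g c (p + 2) * Z * hc + pathSeq g c (p + 2) * Z * hg +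
      pathSeq g c (p + 2) * eZ + (1 - α) * hx2
  have hpos2 : ∀ k, 1 ≤ k → k ≤ p + 2 → 0 < pathSeq g c k := by
    intro k hk hkp
    rcases hkp.eq_or_lt with h | h
    · rw [h]; exact hx2pos
    · exact hpos k hk (by omega)
  have : Nontrivial V := Fintype.one_lt_card_iff_nontrivial.1 (by omega)
  obtain ⟨r0, hr0⟩ := hG.exists_connected_induce_compl_singleton_of_finite_nontrivial
  obtain ⟨v1, hv1⟩ := exists_ne r0
  obtain ⟨u, hu, r, hr, hur⟩ := exists_boundary hG.preconnected (T := {r0}) rfl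
    (show v1 ∉ ({r0} : Set V) from hv1)
  rw [Set.mem_singleton_iff] at hu
  subst hu
  have hne : r ≠ u := hr
  refine compare_of_rootedConn le_rfl h0 h1 hlam hg hc
    (fun a b ha hb hab => subadd_of_path h1 hg0 hg hpos2 hend ha hb hab)
    (K := {u, r}) ?_ hcard (r := r) (by simp) ?_
  · rw [SimpleGraph.isNClique_iff]
    refine ⟨?_, card_pair hne.symm⟩
    rw [coe_pair, SimpleGraph.isClique_pair]
    exact fun _ => hur
  · have hKe : ({u, r} : Finset V).erase r = {u} := by
      ext v
      simp only [mem_erase, mem_insert, mem_singleton]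
      constructor
      · rintro ⟨h, h' | h'⟩
        · exact h'
        · exact absurd h' h
      · rintro rfl
        exact ⟨hne.symm, Or.inl rfl⟩
    rw [hKe]
    intro T hT hrT hTne
    obtain ⟨w, hw, hwT⟩ : ∃ w ∈ univ \ {u}, w ∉ T := by
      by_contra! h
      exact hTne (subset_antisymm hT h)
    have hwu : w ≠ u := by simpa using hw
    obtain ⟨x, hx, y, hy, hxy⟩ := exists_boundary hr0.preconnected
      (T := {x | (x : V) ∈ T}) (a := ⟨r, hne⟩) (b := ⟨w, hwu⟩) hrT hwT
    refine ⟨x, hx, y, ?_, hxy⟩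
    have : (y : V) ≠ u := y.2
    simp only [mem_sdiff, mem_univ, true_and, mem_singleton]
    exact ⟨this, hy⟩

/-- Cliques of order `q ≥ 3`: either everything outside the clique hangs off one of its
vertices, or two clique vertices have outside neighbours. -/
lemma compare_three {G : SimpleGraph V} (hG : G.Connected) {p q : ℕ} (hq : 3 ≤ q)
    {K : Finset V} (hK : G.IsNClique q K) (hcard : Fintype.card V = p + q) {α lam g c : ℝ}
    (h0 : 0 ≤ α) (h1 : α < 1) (hlam : lam = rhoAlpha α (pkGraph p q)) (hg0 : 0 ≤ g)
    (hg : (1 - α) * g = α) (hc : (1 - α) * c = lam - 2 * α) :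
    lam ≤ rhoAlpha α G ∧ (rhoAlpha α G = lam → Nonempty (G ≃g pkGraph p q)) := by
  classical
  have hb : 0 < 1 - α := by linarith
  obtain ⟨hpos, X, Z, hX, hZ, eX, eZ⟩ := pk_perron (by omega : 2 ≤ q) h0 h1 hlam hg hc
  have hQ : (3 : ℝ) ≤ q := by exact_mod_cast hq
  have hlam2 := sub_one_le_lam h1 (by linarith) (pathWeight_nonneg h0 h1 hg hpos) hX hZ eX eZ
  have hc2 : 2 ≤ c := by
    refine le_of_mul_le_mul_left (a := 1 - α) ?_ hb
    rw [hc]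
    linarith
  have hsub : ∀ a b, 1 ≤ a → 1 ≤ b → a + b ≤ p →
      pathWeight α g c (a + b) < pathWeight α g c a + pathWeight α g c b :=
    fun a b ha hb _ => subadd_of_two_le h1 hg0 hg hc2 ha hb
  have hqK : K.card = q := hK.card_eq
  by_cases hKu : K = univ
  · obtain ⟨r, hr⟩ : K.Nonempty := card_pos.1 (by omega)
    refine compare_of_rootedConn (by omega) h0 h1 hlam hg hc hsub hK hcard hr ?_
    intro T hT hrT hTne
    refine absurd (subset_antisymm hT fun v hv => ?_) hTne
    have : v = r := by simpa [hKu] using hv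
    exact this ▸ hrT
  obtain ⟨v0, hv0⟩ : ∃ v, v ∉ K := by
    by_contra! h
    exact hKu (eq_univ_of_forall h)
  obtain ⟨r1, hr1⟩ : K.Nonempty := card_pos.1 (by omega)
  obtain ⟨r, hr, a, ha, hra⟩ := exists_boundary hG.preconnected (T := (K : Set V)) hr1 hv0
  rw [mem_coe] at hr ha
  by_cases hconn : RootedConn G (univ \ K.erase r) r
  · exact compare_of_rootedConn (by omega) h0 h1 hlam hg hc hsub hK hcard hr hconn
  unfold RootedConn at hconn
  push Not at hconn
  obtain ⟨T, hT, hrT, hTne, hno⟩ := hconn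
  obtain ⟨w, hw, hwT⟩ : ∃ w ∈ univ \ K.erase r, w ∉ T := by
    by_contra! h
    exact hTne (subset_antisymm hT h)
  -- the part of the graph that `T` misses is attached to the clique away from `r`
  obtain ⟨b, hbm, r', hr', hbr⟩ := exists_boundary hG.preconnected
    (T := ((univ \ K.erase r) \ T : Finset V)) (a := w) (b := r) (mem_coe.2 (mem_sdiff.2 ⟨hw, hwT⟩))
    (by simp [hrT])
  rw [mem_coe, mem_sdiff] at hbm hr'
  have hr'T : r' ∉ T := fun h => hno r' h b (mem_sdiff.2 hbm) hbr.symm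
  have hr'K : r' ∈ K.erase r := by
    by_contra h
    exact hr' ⟨by simpa using h, hr'T⟩
  have hbr' : b ≠ r := fun h => hbm.2 (h ▸ hrT)
  have hbK : b ∉ K := fun h => (mem_sdiff.1 hbm.1).2 (mem_erase.2 ⟨hbr', h⟩)
  have hlt : lam < rhoAlpha α G := by
    refine two_pendants ?_ hq h0 h1 hlam hg hc hc2 hK hr (mem_of_mem_erase hr'K)
      (ne_of_mem_erase hr'K).symm ha hbK hra hbr.symm
    have := card_lt_univ_of_notMem ha
    omega
  exact ⟨hlt.le, fun h => absurd h hlt.ne'⟩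

end Compare

/-- Let `α ∈ [0,1)`. If `G` is a connected graph of order `n`
with clique number `ω ≥ 2`, then `ρ_α(G) ≥ ρ_α(PK_{n−ω,ω})`, with equality if
and only if `G` is isomorphic to `PK_{n−ω,ω}`. -/
theorem alphaIndex_ge_pk {n ω : ℕ} (α : ℝ) (hα0 : 0 ≤ α) (hα1 : α < 1)
    {V : Type*} [Fintype V] [DecidableEq V] (G : SimpleGraph V)
    (hcard : Fintype.card V = n) (hconn : G.Connected)
    (hclique : G.cliqueNum = ω) (hω : 2 ≤ ω) :
    rhoAlpha α (pkGraph (n - ω) ω) ≤ rhoAlpha α G ∧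
      (rhoAlpha α G = rhoAlpha α (pkGraph (n - ω) ω) ↔
        Nonempty (G ≃g pkGraph (n - ω) ω)) := by
  classical
  have hb : 0 < 1 - α := by linarith
  obtain ⟨K, hK⟩ := G.exists_isNClique_cliqueNum
  rw [hclique] at hK
  have hle : ω ≤ n := by
    rw [← hcard, ← hK.card_eq]
    exact card_le_univ K
  obtain ⟨p, hp⟩ : ∃ p, p = n - ω := ⟨_, rfl⟩
  rw [← hp]
  have hcard' : Fintype.card V = p + ω := by omega
  have hg : (1 - α) * (α / (1 - α)) = α := mul_div_cancel₀ _ hb.ne'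
  have hc : (1 - α) * ((rhoAlpha α (pkGraph p ω) - 2 * α) / (1 - α)) =
      rhoAlpha α (pkGraph p ω) - 2 * α := mul_div_cancel₀ _ hb.ne'
  have hg0 : 0 ≤ α / (1 - α) := by positivity
  have main : rhoAlpha α (pkGraph p ω) ≤ rhoAlpha α G ∧
      (rhoAlpha α G = rhoAlpha α (pkGraph p ω) → Nonempty (G ≃g pkGraph p ω)) := by
    rcases hω.eq_or_lt with h | h
    · subst h
      exact compare_two hconn hcard' hα0 hα1 rfl hg0 hg hc
    · exact compare_three hconn h hK hcard' hα0 hα1 rfl hg0 hg hc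
  refine ⟨main.1, main.2, ?_⟩
  rintro ⟨e⟩
  exact le_antisymm
    (rho_mono hconn hα0 hα1 e.toEquiv fun i j hij => e.map_rel_iff.2 hij).1 main.1
end

section
/- Let α ∈ [0,1) and let G be a connected graph with ρ := ρ_α(G) ≥ 2. Let P = (u_1,…,u_{r+1}) be a pendent path in G with root u_1, and let x_1,…,x_{r+1} be the entries of a positive unit eigenvector of A_α(G) with eigenvalue ρ corresponding to u_1,…,u_{r+1}. Then x_1 > x_2 > ⋯ > x_{r+1}. -/
/-- `w` is a cut vertex of `G`: `G` is connected but deleting `w` disconnects it. -/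
def IsCutVertex {V : Type*} (G : SimpleGraph V) (w : V) : Prop :=
  G.Connected ∧ ¬ (G.induce {x | x ≠ w}).Connected

/-- `(u 0, u 1, …, u r)` is a pendent path of `G` with root `u 0`:
the vertices are distinct, consecutive ones are adjacent, the root is a cut
vertex of `G`, the internal vertices have degree 2 in `G`, and the last vertex
has degree 1 in `G`. -/
def IsPendentPath {V : Type*} [Fintype V] [DecidableEq V]
    (G : SimpleGraph V) {r : ℕ} (u : Fin (r + 1) → V) : Prop :=
  letI := Classical.decRel G.Adj
  Function.Injective u ∧
  (∀ i : Fin r, G.Adj (u i.castSucc) (u i.succ)) ∧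
  (∀ i : Fin (r + 1), 0 < i.val → i.val < r → G.degree (u i) = 2) ∧
  (0 < r → G.degree (u (Fin.last r)) = 1) ∧
  IsCutVertex G (u 0)

/-- The eigenvalue equation of `A_α(G)`, read off at one vertex. -/
theorem Aalpha_eigen_apply {V : Type*} [Fintype V] [DecidableEq V] (α ρ : ℝ)
    (G : SimpleGraph V) [DecidableRel G.Adj] (x : V → ℝ)
    (heig : (Aalpha α G).mulVec x = ρ • x) (v : V) :
    α * (G.degree v * x v) + (1 - α) * ∑ w ∈ G.neighborFinset v, x w = ρ * x v := by
  have h := congrFun heig v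
  simp only [Aalpha, Matrix.add_mulVec, Matrix.smul_mulVec, Pi.add_apply, Pi.smul_apply,
    Matrix.mulVec_diagonal, SimpleGraph.adjMatrix_mulVec_apply, smul_eq_mul] at h
  convert h

/-- Let `α ∈ [0,1)` and `G` a connected graph with
`ρ := ρ_α(G) ≥ 2`. Let `(u 0, …, u r)` be a pendent path in `G` with root `u 0`,
and let `x` be a positive unit eigenvector of `A_α(G)` with eigenvalue `ρ`.
Then `x (u 0) > x (u 1) > ⋯ > x (u r)`. -/
theorem pendentPath_strictAnti (α : ℝ) (hα0 : 0 ≤ α) (hα1 : α < 1)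
    {V : Type*} [Fintype V] [DecidableEq V] (G : SimpleGraph V)
    (hconn : G.Connected) (hρ : 2 ≤ rhoAlpha α G)
    {r : ℕ} (u : Fin (r + 1) → V) (hpath : IsPendentPath G u)
    (x : V → ℝ) (hx : ∀ w, 0 < x w) (hunit : ∑ w, x w ^ 2 = 1)
    (heig : (Aalpha α G).mulVec x = rhoAlpha α G • x) :
    StrictAnti (fun i : Fin (r + 1) => x (u i)) := by
  classical
  obtain ⟨hinj, hadj, hdeg2, hdeg1, -⟩ := hpath
  have hE := Aalpha_eigen_apply α (rhoAlpha α G) G x heig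
  generalize rhoAlpha α G = ρ at hρ hE
  rw [Fin.strictAnti_iff_succ_lt]
  -- Induction on the distance `k` from the end of the path.
  have key : ∀ k : ℕ, ∀ i : Fin r, i.val + 1 + k = r → x (u i.succ) < x (u i.castSucc) := by
    intro k
    induction k with
    | zero =>
      intro i hi
      have hlast : i.succ = Fin.last r := by
        ext
        simpa using hi
      have hd : G.degree (u i.succ) = 1 := by
        rw [hlast]
        convert hdeg1 (by omega)
      have hN : G.neighborFinset (u i.succ) = {u i.castSucc} := by
        symm
        apply Finset.eq_of_subset_of_card_le
        · simpa using (hadj i).symm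
        · simp [hd]
      have h := hE (u i.succ)
      rw [hN, hd, Finset.sum_singleton] at h
      push_cast at h
      have hp := hx (u i.succ)
      have hmul : (1 - α) * x (u i.succ) < (1 - α) * x (u i.castSucc) := by nlinarith
      exact lt_of_mul_lt_mul_left hmul (by linarith)
    | succ k ih =>
      intro i hi
      obtain ⟨j, hj⟩ : ∃ j : Fin r, j.val = i.val + 1 := ⟨⟨i.val + 1, by omega⟩, rfl⟩
      have hji : j.castSucc = i.succ := by
        ext
        simpa using hj
      have hlt := ih j (by omega)
      have hadj' := hadj j
      rw [hji] at hlt hadj'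
      have hd : G.degree (u i.succ) = 2 := by
        convert hdeg2 i.succ (by simp) (by simp; omega)
      have hne : u i.castSucc ≠ u j.succ := by
        intro he
        have := congrArg Fin.val (hinj he)
        simp at this
        omega
      have hN : G.neighborFinset (u i.succ) = {u i.castSucc, u j.succ} := by
        symm
        apply Finset.eq_of_subset_of_card_le
        · intro w hw
          rw [Finset.mem_insert, Finset.mem_singleton] at hw
          rw [SimpleGraph.mem_neighborFinset]
          rcases hw with rfl | rfl
          · exact (hadj i).symm
          · exact hadj'
        · rw [Finset.card_pair hne, SimpleGraph.card_neighborFinset_eq_degree, hd]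
      have h := hE (u i.succ)
      rw [hN, hd, Finset.sum_pair hne] at h
      push_cast at h
      have hp := hx (u i.succ)
      have hmul : (1 - α) * x (u i.succ) < (1 - α) * x (u i.castSucc) := by
        have h1 : 0 < (1 - α) * (x (u i.succ) - x (u j.succ)) :=
          mul_pos (by linarith) (by linarith)
        have h2 : 0 ≤ (ρ - 2) * x (u i.succ) := mul_nonneg (by linarith) hp.le
        linarith
      exact lt_of_mul_lt_mul_left hmul (by linarith)
  intro i
  exact key (r - (i.val + 1)) i (by omega)
end

section
/- Let α ∈ [0,1) and let G be a connected graph with ρ := ρ_α(G) > 2. Let P = (u_1,…,u_{r+1}) be a pendent path in G with root u_1, and let x_1,…,x_{r+1} be the entries of a positive unit eigenvector of A_α(G) with eigenvalue ρ corresponding to u_1,…,u_{r+1}. Set γ = (1/2)((ρ−2α)/(1−α) + sqrt(((ρ−2α)/(1−α))² − 4)), and let (A,B) be the unique solution of the linear system A + B = −(α/(1−α))·x_{r+1}, A·γ + B·γ^{−1} = x_{r+1}. Then x_i = A·γ^{r+2−i} + B·γ^{i−r−2} for every i = 1,…,r+1. -/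
/-- `γ`, the larger root of `X² − ((ρ−2α)/(1−α))X + 1 = 0`. -/
noncomputable def gammaOf (α ρ : ℝ) : ℝ :=
  (1 / 2) * ((ρ - 2 * α) / (1 - α) +
    Real.sqrt (((ρ - 2 * α) / (1 - α)) ^ 2 - 4))

/-- `γ` is nonzero and `γ + γ⁻¹ = (ρ - 2α)/(1 - α)`; here `ρ > 2` makes the discriminant
nonnegative. -/
lemma gammaOf_add_inv {α ρ : ℝ} (hα1 : α < 1) (hρ : 2 < ρ) :
    gammaOf α ρ ≠ 0 ∧ gammaOf α ρ + (gammaOf α ρ)⁻¹ = (ρ - 2 * α) / (1 - α) := by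
  have h1 : 0 < 1 - α := by linarith
  have hb : 2 < (ρ - 2 * α) / (1 - α) := by
    rw [lt_div_iff₀ h1]; linarith
  unfold gammaOf
  generalize (ρ - 2 * α) / (1 - α) = b at hb ⊢
  have hs := Real.sq_sqrt (show (0 : ℝ) ≤ b ^ 2 - 4 by nlinarith)
  have hs0 := Real.sqrt_nonneg (b ^ 2 - 4)
  generalize Real.sqrt (b ^ 2 - 4) = s at hs hs0
  have hne : (1 / 2) * (b + s) ≠ 0 := by
    have : 0 < (1 / 2) * (b + s) := by linarith
    exact this.ne'
  refine ⟨hne, ?_⟩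
  have hinv : ((1 / 2) * (b + s))⁻¹ = (1 / 2) * (b - s) := by
    apply inv_eq_of_mul_eq_one_right
    linear_combination (-1 / 4) * hs
  rw [hinv]; ring

lemma Aalpha_mulVec_apply {V : Type*} [Fintype V] [DecidableEq V] (α : ℝ)
    (G : SimpleGraph V) [DecidableRel G.Adj] (x : V → ℝ) (v : V) :
    (Aalpha α G).mulVec x v =
      α * (G.degree v * x v) + (1 - α) * ∑ w ∈ G.neighborFinset v, x w := by
  simp only [Aalpha, Matrix.add_mulVec, Matrix.smul_mulVec, Pi.add_apply, Pi.smul_apply,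
    Matrix.mulVec_diagonal, SimpleGraph.adjMatrix_mulVec_apply, smul_eq_mul]
  -- Only the decidability instances behind `degree` and `neighborFinset` differ.
  congr!

lemma neighborFinset_eq_singleton {V : Type*} [Fintype V] {G : SimpleGraph V} [DecidableRel G.Adj] {v a : V}
    (hd : G.degree v = 1) (ha : G.Adj v a) : G.neighborFinset v = {a} := by
  symm
  apply Finset.eq_of_subset_of_card_le
  · simpa using ha
  · rw [G.card_neighborFinset_eq_degree, hd, Finset.card_singleton]

lemma neighborFinset_eq_pair {V : Type*} [Fintype V] [DecidableEq V] {G : SimpleGraph V} [DecidableRel G.Adj] {v a b : V}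
    (hd : G.degree v = 2) (ha : G.Adj v a) (hb : G.Adj v b) (hab : a ≠ b) :
    G.neighborFinset v = {a, b} := by
  symm
  apply Finset.eq_of_subset_of_card_le
  · intro w hw
    rcases Finset.mem_insert.1 hw with rfl | hw
    · simpa using ha
    · rw [Finset.mem_singleton.1 hw]; simpa using hb
  · rw [G.card_neighborFinset_eq_degree, hd, Finset.card_pair hab]

/-- Let `α ∈ [0,1)` and `G` a connected graph with
`ρ := ρ_α(G) > 2`. Let `(u 0, …, u r)` be a pendent path in `G` with root `u 0`,
and let `x` be a positive unit eigenvector of `A_α(G)` with eigenvalue `ρ`.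
Set `γ` as usual, and let `(A, B)` solve `A + B = −(α/(1−α))·x (u r)` and
`A·γ + B·γ⁻¹ = x (u r)`. Then (in the paper's 1-indexed notation
`x_i = A·γ^{r+2−i} + B·γ^{i−r−2}` for `i = 1, …, r+1`, i.e. 0-indexed)
`x (u i) = A·γ^{r+1−i} + B·γ^{i−r−1}` for every `i = 0, …, r`. -/
theorem pendentPath_explicit (α : ℝ) (hα0 : 0 ≤ α) (hα1 : α < 1)
    {V : Type*} [Fintype V] [DecidableEq V] (G : SimpleGraph V)
    (hconn : G.Connected) (hρ : 2 < rhoAlpha α G)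
    {r : ℕ} (u : Fin (r + 1) → V) (hpath : IsPendentPath G u)
    (x : V → ℝ) (hx : ∀ w, 0 < x w) (hunit : ∑ w, x w ^ 2 = 1)
    (heig : (Aalpha α G).mulVec x = rhoAlpha α G • x)
    (A B : ℝ)
    (hAB1 : A + B = -(α / (1 - α)) * x (u (Fin.last r)))
    (hAB2 : A * gammaOf α (rhoAlpha α G) + B * (gammaOf α (rhoAlpha α G))⁻¹ =
      x (u (Fin.last r))) :
    ∀ i : Fin (r + 1),
      x (u i) = A * gammaOf α (rhoAlpha α G) ^ ((r : ℤ) + 1 - (i.val : ℤ)) +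
        B * gammaOf α (rhoAlpha α G) ^ ((i.val : ℤ) - ((r : ℤ) + 1)) := by
  classical
  have hinst : Classical.decRel G.Adj = fun a b => Classical.propDecidable (G.Adj a b) :=
    Subsingleton.elim _ _
  obtain ⟨hinj, hadj, hdeg2, hdeg1, -⟩ := hpath
  rw [hinst] at hdeg2 hdeg1
  have hpt : ∀ v, α * (G.degree v * x v) + (1 - α) * ∑ w ∈ G.neighborFinset v, x w =
      rhoAlpha α G * x v := by
    intro v
    rw [← Aalpha_mulVec_apply, heig]; rfl
  obtain ⟨hγ, hsum⟩ := gammaOf_add_inv hα1 hρ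
  generalize rhoAlpha α G = ρ at *
  generalize gammaOf α ρ = γ at *
  have h1 : 1 - α ≠ 0 := by linarith
  have hadj' : ∀ (i : ℕ) (hi : i < r), G.Adj (u ⟨i, by omega⟩) (u ⟨i + 1, by omega⟩) :=
    fun i hi => hadj ⟨i, hi⟩
  have hrec : ∀ k : ℕ, A * γ ^ (k + 2) + B * γ⁻¹ ^ (k + 2) =
      (ρ - 2 * α) / (1 - α) * (A * γ ^ (k + 1) + B * γ⁻¹ ^ (k + 1)) -
        (A * γ ^ k + B * γ⁻¹ ^ k) := by
    intro k
    have hm : γ * γ⁻¹ = 1 := mul_inv_cancel₀ hγ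
    rw [← hsum]
    linear_combination (-(A * γ ^ k + B * γ⁻¹ ^ k)) * hm
  -- `k` is the distance from the pendent end of the path.
  have key : ∀ (k i : ℕ) (hi : i < r + 1), i + k = r →
      x (u ⟨i, hi⟩) = A * γ ^ (k + 1) + B * γ⁻¹ ^ (k + 1) := by
    intro k
    induction k using Nat.twoStepInduction with
    | zero =>
      rintro i hi rfl
      simpa [Fin.last] using hAB2.symm
    | one =>
      rintro i hi rfl
      have hN := neighborFinset_eq_singleton (hdeg1 (by omega)) (hadj' i (by omega)).symm
      have h := hpt (u (Fin.last (i + 1)))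
      rw [hdeg1 (by omega), hN, Finset.sum_singleton] at h
      rw [hrec 0]
      simp only [zero_add, pow_one, pow_zero, mul_one, hAB1, hAB2]
      field_simp
      push_cast at h
      linear_combination h
    | more k ih0 ih1 =>
      intro i hi hik
      have hne : u ⟨i, hi⟩ ≠ u ⟨i + 2, by omega⟩ := fun h => by
        have := congrArg Fin.val (hinj h)
        simp at this
      have hd := hdeg2 ⟨i + 1, by omega⟩ (by simp) (by simp; omega)
      have hN := neighborFinset_eq_pair hd (hadj' i (by omega)).symm
        (hadj' (i + 1) (by omega)) hne
      have h := hpt (u ⟨i + 1, by omega⟩)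
      rw [hd, hN, Finset.sum_pair hne] at h
      rw [hrec (k + 1), ← ih1 (i + 1) (by omega) (by omega), ← ih0 (i + 2) (by omega) (by omega)]
      field_simp
      push_cast at h
      linear_combination h
  intro i
  obtain ⟨k, hk⟩ : ∃ k, i.val + k = r := ⟨r - i.val, by omega⟩
  have e1 : (r : ℤ) + 1 - (i.val : ℤ) = ((k + 1 : ℕ) : ℤ) := by omega
  have e2 : (i.val : ℤ) - ((r : ℤ) + 1) = -((k + 1 : ℕ) : ℤ) := by omega
  rw [e1, e2, zpow_neg, zpow_natCast, ← inv_pow]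
  exact key k i.val i.isLt hk
end
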